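/- arXiv:0801.0233 — 2 statements merged into one kernel-verified Lean document; each statement's English description precedes it below -/
import Mathlib

section
/- Let r ≥ 1 and let λ̄ = (λ^{(1)},…,λ^{(r)}) be a sequence of partitions in P_n. Then a_ρ(x)·s_λ̄(x|y) = Σ c_T(y) · a_{ρ+ω(T)}(x), where the sum is over all barred skew tableaux T ∈ B_λ̄ whose unbarred column word is Yamanouchi. -/
open Finset MvPolynomial

attribute [local instance] Classical.propDecidable

/-- A partition in `P_n`: a weakly decreasing sequence of naturals. -/
def IsPartition {n : ℕ} (lam : Fin n → ℕ) : Prop := Antitone lam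

/-- The cells of the Young diagram of `lam`, as pairs (row, column), 0-based. -/
noncomputable def cells {n : ℕ} (lam : Fin n → ℕ) : Finset (Fin n × ℕ) :=
  (Finset.univ ×ˢ Finset.range (Finset.univ.sup lam)).filter fun c => c.2 < lam c.1

/-- Semistandardness for a filling with values in `Fin n` (0-based values):
rows weakly increase, columns strictly increase. -/
def IsSSYT {n : ℕ} (lam : Fin n → ℕ) (T : cells lam → Fin n) : Prop :=
  (∀ c d : cells lam, (c : Fin n × ℕ).1 = (d : Fin n × ℕ).1 →
      (c : Fin n × ℕ).2 ≤ (d : Fin n × ℕ).2 → T c ≤ T d) ∧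
  (∀ c d : cells lam, (c : Fin n × ℕ).2 = (d : Fin n × ℕ).2 →
      (c : Fin n × ℕ).1 < (d : Fin n × ℕ).1 → T c < T d)

/-- The y-subscript `a + c(a) - r(a)` of a cell (1-based value and coordinates). -/
def ysub {n : ℕ} (a : Fin n) (c : Fin n × ℕ) : ℤ := (a : ℤ) + 1 + (c.2 : ℤ) - ((c.1 : ℕ) : ℤ)

/-- The Schur polynomial `s_lam(x)`, in the ring with `x`-variables `Sum.inl i`
and `y`-variables `Sum.inr (i, k)` (family `i`, subscript `k`). -/
noncomputable def schur (n r : ℕ) (lam : Fin n → ℕ) :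
    MvPolynomial (Fin n ⊕ Fin r × ℤ) ℤ :=
  ∑ T ∈ Finset.univ.filter (IsSSYT lam), ∏ c : cells lam, X (Sum.inl (T c))

/-- The factorial Schur polynomial `s_lam(x | y^{(i)})`. -/
noncomputable def factSchur (n r : ℕ) (i : Fin r) (lam : Fin n → ℕ) :
    MvPolynomial (Fin n ⊕ Fin r × ℤ) ℤ :=
  ∑ T ∈ Finset.univ.filter (IsSSYT lam),
    ∏ c : cells lam,
      (X (Sum.inl (T c)) + X (Sum.inr (i, ysub (T c) (c : Fin n × ℕ))))

/-- A barred filling of a single Young diagram: an entry is a value in `Fin n`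
(0-based) together with a `Bool` recording whether it is barred.  Rows weakly
increase and columns strictly increase in value, disregarding bars. -/
def IsBarred {n : ℕ} (lam : Fin n → ℕ) (T : cells lam → Fin n × Bool) : Prop :=
  (∀ c d : cells lam, (c : Fin n × ℕ).1 = (d : Fin n × ℕ).1 →
      (c : Fin n × ℕ).2 ≤ (d : Fin n × ℕ).2 → (T c).1 ≤ (T d).1) ∧
  (∀ c d : cells lam, (c : Fin n × ℕ).2 = (d : Fin n × ℕ).2 →
      (c : Fin n × ℕ).1 < (d : Fin n × ℕ).1 → (T c).1 < (T d).1)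

/-- A barred skew tableau of shape `λ̄ = (lam 0, …, lam (r-1))`: since consecutive
diagrams are placed strictly below and to the left of the preceding one, no two
diagrams share a row or a column, so such a tableau is exactly a tuple of barred
fillings of the individual diagrams. -/
def IsBarredSkew {n r : ℕ} (lam : Fin r → Fin n → ℕ)
    (T : (i : Fin r) → cells (lam i) → Fin n × Bool) : Prop :=
  ∀ i, IsBarred (lam i) (T i)

/-- Unbarred content of a barred filling of one diagram. -/
noncomputable def content1 {n : ℕ} (lam : Fin n → ℕ) (T : cells lam → Fin n × Bool)
    (k : Fin n) : ℕ :=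
  (Finset.univ.filter fun c : cells lam => T c = (k, false)).card

/-- Unbarred content `ω(T)` of a barred skew tableau. -/
noncomputable def contentT {n r : ℕ} (lam : Fin r → Fin n → ℕ)
    (T : (i : Fin r) → cells (lam i) → Fin n × Bool) (k : Fin n) : ℕ :=
  ∑ i, content1 (lam i) (T i) k

/-- The monomial `c_T(y)` contributed by the barred entries of one diagram
(living in the ring of `y`-variables only). -/
noncomputable def cT1 {n : ℕ} (r : ℕ) (i : Fin r) (lam : Fin n → ℕ)
    (T : cells lam → Fin n × Bool) : MvPolynomial (Fin r × ℤ) ℤ :=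
  ∏ c ∈ Finset.univ.filter (fun c : cells lam => (T c).2 = true),
    X (i, ysub (T c).1 (c : Fin n × ℕ))

/-- The monomial `c_T(y)` of a barred skew tableau. -/
noncomputable def cT {n r : ℕ} (lam : Fin r → Fin n → ℕ)
    (T : (i : Fin r) → cells (lam i) → Fin n × Bool) : MvPolynomial (Fin r × ℤ) ℤ :=
  ∏ i, cT1 r i (lam i) (T i)

/-- The unbarred column word of a barred filling of one diagram: unbarred values
(0-based) read down each column, from the rightmost column to the leftmost. -/
noncomputable def colWord1 {n : ℕ} (lam : Fin n → ℕ)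
    (T : cells lam → Fin n × Bool) : List ℕ :=
  ((List.range (Finset.univ.sup lam)).reverse).flatMap fun j =>
    (List.finRange n).filterMap fun i =>
      if h : (i, j) ∈ cells lam then
        (if (T ⟨(i, j), h⟩).2 = false then some ((T ⟨(i, j), h⟩).1 : ℕ) else none)
      else none

/-- The unbarred column word of a barred skew tableau: diagram `lam 0` is the
rightmost, so its word comes first. -/
noncomputable def colWord {n r : ℕ} (lam : Fin r → Fin n → ℕ)
    (T : (i : Fin r) → cells (lam i) → Fin n × Bool) : List ℕ :=
  (List.finRange r).flatMap fun i => colWord1 (lam i) (T i)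

/-- A word (with 0-based values) is Yamanouchi if every initial segment contains
at least as many `k`'s as `(k+1)`'s, for every `k`. -/
def IsYam (w : List ℕ) : Prop :=
  ∀ t k, ((w.take t).count (k + 1)) ≤ (w.take t).count k

/-- The alternant `a_ξ(x) = det[(x_i)^{ξ_j}]`. -/
noncomputable def avand (n r : ℕ) (xi : Fin n → ℕ) :
    MvPolynomial (Fin n ⊕ Fin r × ℤ) ℤ :=
  Matrix.det (Matrix.of fun i j : Fin n =>
    (X (Sum.inl i) : MvPolynomial (Fin n ⊕ Fin r × ℤ) ℤ) ^ xi j)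

/-- `ρ = (n-1, n-2, …, 0)`. -/
def rhoPart (n : ℕ) : Fin n → ℕ := fun i => n - 1 - (i : ℕ)


theorem mem_cells' {n : ℕ} {lam : Fin n → ℕ} {c : Fin n × ℕ} : c ∈ cells lam ↔ c.2 < lam c.1 := by
  simp only [cells, mem_filter, mem_product, mem_univ, mem_range, true_and, and_iff_right_iff_imp]
  intro h
  exact lt_of_lt_of_le h (Finset.le_sup (f := lam) (mem_univ _))

theorem thr0 (B : ℕ) (P : ℕ → Prop) (hP : ∀ c d, c ≤ d → d < B → P d → P c) :
    ∃ N ≤ B, ∀ c < B, (P c ↔ c < N) := by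
  induction B with
  | zero => exact ⟨0, le_rfl, by simp⟩
  | succ B ih =>
    by_cases h : P B
    · refine ⟨B + 1, le_rfl, fun c hc => ⟨fun _ => hc, fun _ => hP c B (by omega) (by omega) h⟩⟩
    · obtain ⟨N, hN, hN'⟩ := ih (fun c d h1 h2 h3 => hP c d h1 (by omega) h3)
      refine ⟨N, by omega, fun c hc => ?_⟩
      rcases Nat.lt_succ_iff_lt_or_eq.mp hc with h1 | h1
      · exact hN' c h1
      · subst h1
        constructor
        · intro h2; exact absurd h2 h
        · intro h2; omega

theorem thr1 {n : ℕ} {lam : Fin n → ℕ} {V : cells lam → Fin n} (hV : IsSSYT lam V) (J v : ℕ) :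
    ∃ N : ℕ → ℕ, (∀ i, N i ≤ J) ∧ (∀ i : Fin n, N i ≤ lam i) ∧ (∀ i, n ≤ i → N i = 0) ∧
      (∀ c : cells lam, c.1.2 < J → (((V c : Fin n) : ℕ) < v ↔ c.1.2 < N c.1.1)) := by
  have key : ∀ i : Fin n, ∃ N ≤ min (lam i) J, ∀ c < min (lam i) J,
      ((∃ h : (i, c) ∈ cells lam, ((V ⟨(i, c), h⟩ : Fin n) : ℕ) < v) ↔ c < N) := by
    intro i
    apply thr0
    rintro c d hcd hd ⟨h1, h2⟩
    have h3 : (i, c) ∈ cells lam := by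
      rw [mem_cells'] at h1 ⊢
      simp only at h1 ⊢
      omega
    refine ⟨h3, ?_⟩
    have := hV.1 ⟨(i, c), h3⟩ ⟨(i, d), h1⟩ rfl hcd
    have : ((V ⟨(i, c), h3⟩ : Fin n) : ℕ) ≤ V ⟨(i, d), h1⟩ := this
    omega
  choose N hN1 hN2 using key
  refine ⟨fun i => if h : i < n then N ⟨i, h⟩ else 0, ?_, ?_, ?_, ?_⟩
  · intro i
    by_cases h : i < n
    · have := hN1 ⟨i, h⟩
      simp only [h, dif_pos]; omega
    · simp [h]
  · intro i
    have := hN1 i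
    simp only [i.2, dif_pos, Fin.eta]; omega
  · intro i h
    simp [Nat.not_lt.mpr h]
  · rintro ⟨⟨i, c⟩, h⟩ hc
    have h' := mem_cells'.mp h
    simp only at h' hc
    have := hN2 i c (by omega)
    simp only [i.2, dif_pos, Fin.eta]
    rw [← this]
    constructor
    · intro h2; exact ⟨h, h2⟩
    · rintro ⟨_, h2⟩; exact h2

theorem sym_sum {R : Type*} [CommRing R] (u v : R) (Y : ℕ → R) (L U : ℕ) (h : L ≤ U) :
    (u - v) * ∑ m ∈ Icc L U, (∏ c ∈ Ico L m, (u + Y c)) * ∏ c ∈ Ico m U, (v + Y (c + 1))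
      = (∏ c ∈ Ico L (U + 1), (u + Y c)) - ∏ c ∈ Ico L (U + 1), (v + Y c) := by
  induction U, h using Nat.le_induction with
  | base => simp
  | succ U hU ih =>
    have e : Icc L (U + 1) = insert (U + 1) (Icc L U) := by ext; simp; omega
    rw [e, sum_insert (by simp), Finset.prod_Ico_succ_top (by omega : L ≤ U + 1),
      Finset.prod_Ico_succ_top (by omega : L ≤ U + 1)]
    have e2 : ∑ m ∈ Icc L U, (∏ c ∈ Ico L m, (u + Y c)) * ∏ c ∈ Ico m (U + 1), (v + Y (c + 1))
        = (∑ m ∈ Icc L U, (∏ c ∈ Ico L m, (u + Y c)) * ∏ c ∈ Ico m U, (v + Y (c + 1)))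
          * (v + Y (U + 1)) := by
      rw [Finset.sum_mul]
      refine sum_congr rfl fun m hm => ?_
      rw [Finset.prod_Ico_succ_top (by simp at hm; omega), mul_assoc]
    rw [e2]
    simp only [Ico_self, prod_empty]
    linear_combination (v + Y (U + 1)) * ih

theorem sym_sum' {R : Type*} [CommRing R] [IsDomain R] (u v : R) (Y : ℕ → R) (L U : ℕ)
    (h : L ≤ U) :
    ∑ m ∈ Icc L U, (∏ c ∈ Ico L m, (u + Y c)) * ∏ c ∈ Ico m U, (v + Y (c + 1))
      = ∑ m ∈ Icc L U, (∏ c ∈ Ico L m, (v + Y c)) * ∏ c ∈ Ico m U, (u + Y (c + 1)) := by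
  by_cases huv : u = v
  · subst huv; rfl
  · have h1 := sym_sum u v Y L U h
    have h2 := sym_sum v u Y L U h
    apply mul_left_cancel₀ (sub_ne_zero.mpr huv)
    rw [h1]
    linear_combination h2

/-- The class of fillings related to `V0` by changing `a`/`b` in columns before `J`. -/
def inCl {n : ℕ} (lam : Fin n → ℕ) (V0 : cells lam → Fin n) (J : ℕ) (a b : Fin n)
    (V : cells lam → Fin n) : Prop :=
  IsSSYT lam V ∧ ∀ c, V c = V0 c ∨
    ((c : Fin n × ℕ).2 < J ∧ (V c = a ∨ V c = b) ∧ (V0 c = a ∨ V0 c = b))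

/-- the filling with given switching points -/
noncomputable def Vm {n : ℕ} (lam : Fin n → ℕ) (V0 : cells lam → Fin n) (a b : Fin n)
    (al be : ℕ → ℕ) (m : Fin n → ℕ) : cells lam → Fin n := fun c =>
  if al c.1.1 ≤ c.1.2 ∧ c.1.2 < be c.1.1 then (if c.1.2 < m c.1.1 then a else b) else V0 c

theorem row_weight {R : Type*} [CommRing R] (u v : R) (Y : ℕ → R) (al L U be : ℕ)
    (h1 : al ≤ L) (h3 : U ≤ be) :
    ∑ m ∈ Icc L U, ∏ c ∈ Ico al be, (if c < m then u + Y c else v + Y (c + 1))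
    = (∏ c ∈ Ico al L, (u + Y c)) * (∏ c ∈ Ico U be, (v + Y (c + 1))) *
    ∑ m ∈ Icc L U, (∏ c ∈ Ico L m, (u + Y c)) * ∏ c ∈ Ico m U, (v + Y (c + 1)) := by
  rw [Finset.mul_sum]
  refine sum_congr rfl fun m hm => ?_
  rw [mem_Icc] at hm
  rw [← Finset.prod_Ico_consecutive _ (by omega : al ≤ m) (by omega : m ≤ be)]
  have e1 : ∏ c ∈ Ico al m, (if c < m then u + Y c else v + Y (c + 1))
      = ∏ c ∈ Ico al m, (u + Y c) :=
    prod_congr rfl fun c hc => by rw [mem_Ico] at hc; rw [if_pos hc.2]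
  have e2 : ∏ c ∈ Ico m be, (if c < m then u + Y c else v + Y (c + 1))
      = ∏ c ∈ Ico m be, (v + Y (c + 1)) :=
    prod_congr rfl fun c hc => by rw [mem_Ico] at hc; rw [if_neg (by omega)]
  rw [e1, e2, ← Finset.prod_Ico_consecutive _ h1 hm.1,
    ← Finset.prod_Ico_consecutive _ hm.2 h3]
  ring

/-- threshold data -/
structure Dat {n : ℕ} (lam : Fin n → ℕ) (V0 : cells lam → Fin n) (J k : ℕ)
    (al be : ℕ → ℕ) : Prop where
  alJ : ∀ i, al i ≤ J
  beJ : ∀ i, be i ≤ J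
  allam : ∀ i : Fin n, al i ≤ lam i
  belam : ∀ i : Fin n, be i ≤ lam i
  al0 : ∀ i, n ≤ i → al i = 0
  be0 : ∀ i, n ≤ i → be i = 0
  aliff : ∀ c : cells lam, c.1.2 < J → (((V0 c : Fin n) : ℕ) < k ↔ c.1.2 < al c.1.1)
  beiff : ∀ c : cells lam, c.1.2 < J → (((V0 c : Fin n) : ℕ) < k + 2 ↔ c.1.2 < be c.1.1)

theorem Dat.ex {n : ℕ} {lam : Fin n → ℕ} {V0 : cells lam → Fin n} (hV : IsSSYT lam V0) (J k : ℕ) :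
    ∃ al be, Dat lam V0 J k al be := by
  obtain ⟨al, h1, h2, h3, h4⟩ := thr1 hV J k
  obtain ⟨be, g1, g2, g3, g4⟩ := thr1 hV J (k + 2)
  exact ⟨al, be, h1, g1, h2, g2, h3, g3, h4, g4⟩

/-- make a cell -/
def mkc {n : ℕ} (lam : Fin n → ℕ) (i c : ℕ) (hi : i < n) (hc : c < lam ⟨i, hi⟩) : cells lam :=
  ⟨(⟨i, hi⟩, c), mem_cells'.mpr hc⟩

theorem colstep {n : ℕ} {lam : Fin n → ℕ} (hlam : IsPartition lam) {V : cells lam → Fin n}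
    (hV : IsSSYT lam V) (i c : ℕ) (hi : i + 1 < n) (hc : c < lam ⟨i + 1, hi⟩) :
    ∃ hc' : c < lam ⟨i, by omega⟩,
      ((V (mkc lam i c (by omega) hc') : Fin n) : ℕ) < V (mkc lam (i + 1) c hi hc) := by
  have : lam ⟨i + 1, hi⟩ ≤ lam ⟨i, by omega⟩ := hlam (by simp [Fin.le_def])
  refine ⟨by omega, ?_⟩
  exact hV.2 (mkc lam i c (by omega) (by omega)) (mkc lam (i + 1) c hi hc) rfl (by simp [mkc, Fin.lt_def])

section
variable {n : ℕ} {lam : Fin n → ℕ} {V0 : cells lam → Fin n} {J k : ℕ} {al be : ℕ → ℕ}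

theorem Dat.alk (D : Dat lam V0 J k al be) (i c : ℕ) (hi : i < n) (hc : c < lam ⟨i, hi⟩)
    (hJ : c < J) : ((V0 (mkc lam i c hi hc) : Fin n) : ℕ) < k ↔ c < al i :=
  D.aliff (mkc lam i c hi hc) hJ

theorem Dat.bek (D : Dat lam V0 J k al be) (i c : ℕ) (hi : i < n) (hc : c < lam ⟨i, hi⟩)
    (hJ : c < J) : ((V0 (mkc lam i c hi hc) : Fin n) : ℕ) < k + 2 ↔ c < be i :=
  D.beiff (mkc lam i c hi hc) hJ

theorem Dat.al_le_be (D : Dat lam V0 J k al be) (i : ℕ) : al i ≤ be i := by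
  by_contra! h
  by_cases hi : i < n
  · have h1 := D.allam ⟨i, hi⟩
    have h2 := D.alJ i
    simp only at h1
    have h3 := D.alk i (be i) hi (by omega) (by omega)
    have h4 := D.bek i (be i) hi (by omega) (by omega)
    omega
  · have := D.al0 i (by omega); omega

theorem Dat.al_succ (D : Dat lam V0 J k al be) (hlam : IsPartition lam) (hV : IsSSYT lam V0)
    (i : ℕ) : al (i + 1) ≤ al i := by
  by_contra! h
  by_cases hi : i + 1 < n
  · have h1 := D.allam ⟨i + 1, hi⟩
    have h2 := D.alJ (i + 1)
    simp only at h1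
    obtain ⟨hc, h5⟩ := colstep hlam hV i (al i) hi (by omega)
    have h3 := D.alk (i + 1) (al i) hi (by omega) (by omega)
    have h4 := D.alk i (al i) (by omega) (by omega) (by omega)
    omega
  · have := D.al0 (i + 1) (by omega); omega

theorem Dat.be_succ (D : Dat lam V0 J k al be) (hlam : IsPartition lam) (hV : IsSSYT lam V0)
    (i : ℕ) : be (i + 1) ≤ be i := by
  by_contra! h
  by_cases hi : i + 1 < n
  · have h1 := D.belam ⟨i + 1, hi⟩
    have h2 := D.beJ (i + 1)
    simp only at h1
    obtain ⟨hc, h5⟩ := colstep hlam hV i (be i) hi (by omega)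
    have h3 := D.bek (i + 1) (be i) hi (by omega) (by omega)
    have h4 := D.bek i (be i) (by omega) (by omega) (by omega)
    omega
  · have := D.be0 (i + 1) (by omega); omega

theorem Dat.be_two (D : Dat lam V0 J k al be) (hlam : IsPartition lam) (hV : IsSSYT lam V0)
    (i : ℕ) : be (i + 2) ≤ al i := by
  by_contra! h
  by_cases hi : i + 2 < n
  · have h1 := D.belam ⟨i + 2, hi⟩
    have h2 := D.beJ (i + 2)
    simp only at h1
    obtain ⟨hc, h5⟩ := colstep hlam hV (i + 1) (al i) hi (lt_of_lt_of_le h h1)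
    obtain ⟨hc', h6⟩ := colstep hlam hV i (al i) (by omega) hc
    have h3 := D.bek (i + 2) (al i) hi (lt_of_lt_of_le h h1) (by omega)
    have h4 := D.alk i (al i) (by omega) (by omega) (by omega)
    have h7 : ((V0 (mkc lam (i + 1 + 1) (al i) hi (lt_of_lt_of_le h h1)) : Fin n) : ℕ) < k + 2 :=
      h3.mpr h
    omega
  · have := D.be0 (i + 2) (by omega); omega

/-- lower bound of switching points -/
def Lo (al be : ℕ → ℕ) (i : ℕ) : ℕ := max (al i) (be (i + 1))
/-- upper bound of switching points -/
def Up (al be : ℕ → ℕ) (i : ℕ) : ℕ := if i = 0 then be 0 else min (be i) (al (i - 1))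

theorem Dat.Lo_le_Up (D : Dat lam V0 J k al be) (hlam : IsPartition lam) (hV : IsSSYT lam V0)
    (i : ℕ) : Lo al be i ≤ Up al be i := by
  unfold Lo Up
  have h1 := D.al_le_be i
  have h2 := D.be_succ hlam hV i
  rcases i with _ | i
  · simp only [ite_true, zero_add] at *; omega
  · have h3 : be (i + 1 + 1) ≤ al i := D.be_two hlam hV i
    have h4 := D.al_succ hlam hV i
    simp only [Nat.add_sub_cancel, Nat.succ_ne_zero, if_false] at *; omega

theorem Dat.Up_le (_D : Dat lam V0 J k al be) (i : ℕ) : Up al be i ≤ be i := by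
  unfold Up
  split_ifs with h
  · rw [h]
  · omega

/-- value description of `Vm` -/
theorem Dat.Vm_val (D : Dat lam V0 J k al be) (a b : Fin n) (ha : (a : ℕ) = k)
    (hb : (b : ℕ) = k + 1) (m : Fin n → ℕ) (c : cells lam) :
    (Vm lam V0 a b al be m c = V0 c ∧ (J ≤ c.1.2 ∨ ((V0 c : ℕ) < k ∧ c.1.2 < al c.1.1) ∨
        (k + 2 ≤ (V0 c : ℕ) ∧ be c.1.1 ≤ c.1.2))) ∨
    (c.1.2 < J ∧ k ≤ (V0 c : ℕ) ∧ (V0 c : ℕ) ≤ k + 1 ∧ al c.1.1 ≤ c.1.2 ∧ c.1.2 < be c.1.1 ∧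
      ((c.1.2 < m c.1.1 ∧ Vm lam V0 a b al be m c = a ∧ (Vm lam V0 a b al be m c : ℕ) = k) ∨
       (m c.1.1 ≤ c.1.2 ∧ Vm lam V0 a b al be m c = b ∧
        (Vm lam V0 a b al be m c : ℕ) = k + 1))) := by
  unfold Vm
  by_cases hJ : c.1.2 < J
  · have h1 := D.aliff c hJ
    have h2 := D.beiff c hJ
    by_cases h : al c.1.1 ≤ c.1.2 ∧ c.1.2 < be c.1.1
    · right
      rw [if_pos h]
      refine ⟨hJ, by omega, by omega, h.1, h.2, ?_⟩
      by_cases h3 : c.1.2 < m c.1.1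
      · left; rw [if_pos h3]; exact ⟨h3, rfl, ha⟩
      · right; rw [if_neg h3]; exact ⟨by omega, rfl, hb⟩
    · left
      rw [if_neg h]
      exact ⟨rfl, by omega⟩
  · left
    have := D.beJ c.1.1
    rw [if_neg (by omega)]
    exact ⟨rfl, Or.inl (by omega)⟩

theorem Dat.Vm_mem (D : Dat lam V0 J k al be) (hlam : IsPartition lam) (hV : IsSSYT lam V0)
    (a b : Fin n) (ha : (a : ℕ) = k) (hb : (b : ℕ) = k + 1)
    (H : ∀ c : cells lam, 0 < J → c.1.2 = J → V0 c = a →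
      ∃ d : cells lam, d.1.2 = J ∧ V0 d = b)
    (m : Fin n → ℕ) (hm : ∀ i : Fin n, Lo al be i ≤ m i ∧ m i ≤ Up al be i) :
    inCl lam V0 J a b (Vm lam V0 a b al be m) := by
  have val := D.Vm_val a b ha hb m
  refine ⟨⟨?_, ?_⟩, ?_⟩
  · rintro ⟨⟨i, c⟩, hc⟩ ⟨⟨i', d⟩, hd⟩ hi hcd
    simp only at hi hcd
    subst hi
    have h0 : (V0 ⟨(i, c), hc⟩ : ℕ) ≤ V0 ⟨(i, d), hd⟩ := hV.1 ⟨(i, c), hc⟩ ⟨(i, d), hd⟩ rfl hcd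
    rw [Fin.le_def]
    have v1 := val ⟨(i, c), hc⟩
    have v2 := val ⟨(i, d), hd⟩
    have hi2 := i.2
    rcases Nat.lt_or_ge d J with hJ | hJ
    · rcases v1 with ⟨e1, v1⟩ | v1 <;> rcases v2 with ⟨e2, v2⟩ | v2 <;>
        (try rw [e1]) <;> (try rw [e2]) <;> simp only at * <;> omega
    · have e2 : Vm lam V0 a b al be m ⟨(i, d), hd⟩ = V0 ⟨(i, d), hd⟩ := by
        rcases v2 with ⟨e2, v2⟩ | v2
        · exact e2
        · simp only at v2; omega
      rw [e2]
      rcases v1 with ⟨e1, v1⟩ | v1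
      · rw [e1]; exact h0
      · simp only at v1
        obtain ⟨w1, w2, w3, w4, w5, w6⟩ := v1
        rcases w6 with ⟨w6, w7, w8⟩ | ⟨w6, w7, w8⟩
        · omega
        by_contra! hcon
        have hcon' : (V0 ⟨(i, d), hd⟩ : ℕ) = k := by omega
        have hdl : d < lam i := mem_cells'.mp hd
        have hJc : (i, J) ∈ cells lam := mem_cells'.mpr (show J < lam i by omega)
        have k1 : (V0 ⟨(i, c), hc⟩ : ℕ) ≤ V0 ⟨(i, J), hJc⟩ :=
          hV.1 ⟨(i, c), hc⟩ ⟨(i, J), hJc⟩ rfl (by simp only; omega)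
        have k2 : (V0 ⟨(i, J), hJc⟩ : ℕ) ≤ V0 ⟨(i, d), hd⟩ :=
          hV.1 ⟨(i, J), hJc⟩ ⟨(i, d), hd⟩ rfl (by simp only; omega)
        obtain ⟨⟨⟨i', J'⟩, hd'⟩, h5, h6⟩ := H ⟨(i, J), hJc⟩ (by omega) rfl (Fin.ext (by omega))
        simp only at h5
        subst h5
        have h6' : (V0 ⟨(i', J'), hd'⟩ : ℕ) = k + 1 := by rw [h6, hb]
        have hii : i < i' := by
          by_contra! hle
          rcases hle.lt_or_eq with hlt | heq
          · have := hV.2 ⟨(i', J'), hd'⟩ ⟨(i, J'), hJc⟩ rfl hlt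
            rw [Fin.lt_def] at this
            omega
          · subst heq; omega
        have hii2 : (i : ℕ) + 1 ≤ i' := hii
        have hin : (i : ℕ) + 1 < n := by omega
        have hl2 : lam i' ≤ lam ⟨i + 1, hin⟩ := hlam (by simp only [Fin.le_def]; omega)
        have hdl' : J' < lam i' := mem_cells'.mp hd'
        have hc2 : (⟨i + 1, hin⟩, J') ∈ cells lam :=
          mem_cells'.mpr (show J' < lam ⟨i + 1, hin⟩ by omega)
        have k3 : (V0 ⟨(⟨i + 1, hin⟩, J'), hc2⟩ : ℕ) ≤ k + 1 := by
          rcases hii2.lt_or_eq with hlt | heq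
          · have := hV.2 ⟨(⟨i + 1, hin⟩, J'), hc2⟩ ⟨(i', J'), hd'⟩ rfl
              (by simp only [Fin.lt_def]; omega)
            rw [Fin.lt_def] at this
            omega
          · have : (⟨i + 1, hin⟩ : Fin n) = i' := Fin.ext heq
            subst this
            omega
        have k4 : (⟨i + 1, hin⟩, c) ∈ cells lam :=
          mem_cells'.mpr (show c < lam ⟨i + 1, hin⟩ by omega)
        have k5 : (V0 ⟨(⟨i + 1, hin⟩, c), k4⟩ : ℕ) ≤ V0 ⟨(⟨i + 1, hin⟩, J'), hc2⟩ :=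
          hV.1 ⟨(⟨i + 1, hin⟩, c), k4⟩ ⟨(⟨i + 1, hin⟩, J'), hc2⟩ rfl (by simp only; omega)
        have k6 := (D.beiff ⟨(⟨i + 1, hin⟩, c), k4⟩ w1).mp (by omega)
        simp only at k6
        have := (hm i).1
        unfold Lo at this
        omega
  · rintro ⟨⟨i, c⟩, hc⟩ ⟨⟨i', d⟩, hd⟩ hcd hi
    simp only at hi hcd
    subst hcd
    have h0 : (V0 ⟨(i, c), hc⟩ : ℕ) < V0 ⟨(i', c), hd⟩ := hV.2 ⟨(i, c), hc⟩ ⟨(i', c), hd⟩ rfl hi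
    rw [Fin.lt_def]
    have v1 := val ⟨(i, c), hc⟩
    have v2 := val ⟨(i', c), hd⟩
    have hii : (i : ℕ) + 1 ≤ i' := hi
    have hin : (i : ℕ) + 1 < n := by omega
    have hne : (i : ℕ) + 1 = i' ∨ (V0 ⟨(i, c), hc⟩ : ℕ) + 2 ≤ V0 ⟨(i', c), hd⟩ := by
      rcases hii.lt_or_eq with hlt | heq
      · right
        have hl2 : lam i' ≤ lam ⟨i + 1, hin⟩ := hlam (by simp only [Fin.le_def]; omega)
        have hdl' : c < lam i' := mem_cells'.mp hd
        have k4 : (⟨i + 1, hin⟩, c) ∈ cells lam :=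
          mem_cells'.mpr (show c < lam ⟨i + 1, hin⟩ by omega)
        have g1 := hV.2 ⟨(i, c), hc⟩ ⟨(⟨i + 1, hin⟩, c), k4⟩ rfl (by simp only [Fin.lt_def]; omega)
        have g2 := hV.2 ⟨(⟨i + 1, hin⟩, c), k4⟩ ⟨(i', c), hd⟩ rfl (by simp only [Fin.lt_def]; omega)
        rw [Fin.lt_def] at g1 g2
        omega
      · left; exact heq
    have m1 := (hm i).1
    have m2 := (hm i').2
    have m3 : (i : ℕ) + 1 = i' → m i' ≤ al i := by
      intro h
      unfold Up at m2
      rw [if_neg (by omega), ← h] at m2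
      simp only [Nat.add_sub_cancel] at m2
      omega
    have m4 : (i : ℕ) + 1 = i' → be i' ≤ m i := by
      intro h
      unfold Lo at m1
      rw [h] at m1
      omega
    clear m1 m2
    rcases v1 with ⟨e1, v1⟩ | v1 <;> rcases v2 with ⟨e2, v2⟩ | v2 <;>
        (try rw [e1]) <;> (try rw [e2]) <;> simp only at * <;> omega
  · intro c
    rcases val c with ⟨e1, v1⟩ | ⟨h1, h2, h3, h4, h5, h6⟩
    · exact Or.inl e1
    · right
      refine ⟨h1, ?_, ?_⟩
      · tauto
      · rcases (by omega : (V0 c : ℕ) = k ∨ (V0 c : ℕ) = k + 1) with h | h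
        · left; exact Fin.ext (by omega)
        · right; exact Fin.ext (by omega)

theorem Dat.Vm_inj (D : Dat lam V0 J k al be)
    (a b : Fin n) (ha : (a : ℕ) = k) (hb : (b : ℕ) = k + 1)
    (m m' : Fin n → ℕ) (hm : ∀ i : Fin n, Lo al be i ≤ m i ∧ m i ≤ Up al be i)
    (hm' : ∀ i : Fin n, Lo al be i ≤ m' i ∧ m' i ≤ Up al be i)
    (h : Vm lam V0 a b al be m = Vm lam V0 a b al be m') (i : Fin n) : m' i ≤ m i := by
  by_contra! hlt
  have h1 := (hm i).1
  have h2 := (hm' i).2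
  have h3 := D.Up_le i
  have h4 := D.belam i
  have h5 : al i ≤ Lo al be i := le_max_left _ _
  have hc : (i, m i) ∈ cells lam := mem_cells'.mpr (show m i < lam i by omega)
  have e := congrFun h ⟨(i, m i), hc⟩
  unfold Vm at e
  simp only at e
  have p : al i ≤ m i ∧ m i < be i := by omega
  rw [if_pos p, if_pos p, if_neg (lt_irrefl _), if_pos hlt] at e
  rw [e] at hb
  omega

theorem Dat.Vm_surj (D : Dat lam V0 J k al be) (hlam : IsPartition lam)
    (a b : Fin n) (ha : (a : ℕ) = k) (hb : (b : ℕ) = k + 1)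
    (V : cells lam → Fin n) (hVc : inCl lam V0 J a b V) :
    ∃ m : Fin n → ℕ, (∀ i : Fin n, Lo al be i ≤ m i ∧ m i ≤ Up al be i) ∧
      Vm lam V0 a b al be m = V := by
  obtain ⟨hV, hcl⟩ := hVc
  obtain ⟨N, n1, n2, n3, n4⟩ := thr1 hV J (k + 1)
  have cl : ∀ c, (V c : ℕ) = V0 c ∨ (k ≤ (V c : ℕ) ∧ (V c : ℕ) ≤ k + 1 ∧ k ≤ (V0 c : ℕ) ∧
      (V0 c : ℕ) ≤ k + 1) := by
    intro c
    rcases hcl c with h | ⟨h1, h2, h3⟩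
    · left; rw [h]
    · right
      rcases h2 with h2 | h2 <;> rcases h3 with h3 | h3 <;> rw [h2, h3] <;> omega
  refine ⟨fun i => N i, fun i => ⟨?_, ?_⟩, ?_⟩
  · unfold Lo
    rw [max_le_iff]
    constructor
    · by_contra! hlt
      have h1 := D.allam i
      have h2 := D.alJ i
      have hc : (i, N i) ∈ cells lam := mem_cells'.mpr (show N i < lam i by omega)
      have g1 := cl ⟨_, hc⟩
      have g2 := D.aliff ⟨_, hc⟩ (by simp only; omega)
      have g3 := n4 ⟨_, hc⟩ (by simp only; omega)
      simp only at *
      omega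
    · by_contra! hlt
      by_cases hi : (i : ℕ) + 1 < n
      · have h1 := D.belam ⟨i + 1, hi⟩
        have h2 := D.beJ (i + 1)
        simp only at h1
        obtain ⟨hc, h5⟩ := colstep hlam hV i (N i) hi (by omega)
        have g1 := cl (mkc lam (i + 1) (N i) hi (by omega))
        have g2 := D.bek (i + 1) (N i) hi (by omega) (by omega)
        have g3 := n4 (mkc lam i (N i) i.2 hc) (by simp only [mkc]; omega)
        have g4 : ((V (mkc lam i (N i) i.2 hc) : Fin n) : ℕ) < k + 1 ↔ N i < N i := g3
        omega
      · have := D.be0 (i + 1) (by omega); omega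
  · have hbe : N i ≤ be i := by
      by_contra! hlt
      have h1 := n2 i
      have h2 := n1 i
      have hc : (i, be i) ∈ cells lam := mem_cells'.mpr (show be i < lam i by omega)
      have g1 := cl ⟨_, hc⟩
      have g2 := D.beiff ⟨_, hc⟩ (by simp only; omega)
      have g3 := n4 ⟨_, hc⟩ (by simp only; omega)
      simp only at *
      omega
    unfold Up
    split_ifs with h0
    · rw [h0] at hbe
      change N i ≤ be 0
      rw [h0]; exact hbe
    · refine le_min hbe ?_
      obtain ⟨i, hi⟩ := i
      rcases i with _ | i
      · simp at h0
      · simp only [Nat.add_sub_cancel]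
        by_contra! hlt
        have h1 := n2 ⟨i + 1, hi⟩
        have h2 := n1 (i + 1)
        simp only at h1
        obtain ⟨hc, h5⟩ := colstep hlam hV i (al i) hi (by omega)
        have g1 := cl (mkc lam i (al i) (by omega) (by omega))
        have g2 := D.alk i (al i) (by omega) (by omega) (by omega)
        have g4 : ((V (mkc lam (i + 1) (al i) hi (by omega)) : Fin n) : ℕ) < k + 1 ↔
          al i < N (i + 1) := n4 (mkc lam (i + 1) (al i) hi (by omega)) (by simp only [mkc]; omega)
        omega
  · funext c
    have g1 := cl c
    rcases D.Vm_val a b ha hb (fun i => N i) c with ⟨e, h⟩ | ⟨h1, h2, h3, h4, h5, h6⟩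
    · rw [e]
      rcases hcl c with h' | ⟨h1, h2, h3⟩
      · exact h'.symm
      · exfalso
        rcases h3 with h3 | h3 <;> rw [h3] at h <;> omega
    · have g3 := n4 c h1
      apply Fin.ext
      omega

/-- The block generating function over a class. -/
noncomputable def Blk {R : Type*} [CommRing R] (lam : Fin n → ℕ) (V0 : cells lam → Fin n) (J : ℕ)
    (a b : Fin n) (y : ℤ → R) (x : Fin n → R) : R :=
  ∑ V ∈ univ.filter (inCl lam V0 J a b), ∏ c : cells lam,
    if (c : Fin n × ℕ).2 < J then x (V c) + y (ysub (V c) c) else 1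

theorem prod_cells {R : Type*} [CommRing R] (lam : Fin n → ℕ) (f : Fin n → ℕ → R) :
    ∏ c : cells lam, f c.1.1 c.1.2 = ∏ i : Fin n, ∏ c ∈ range (lam i), f i c := by
  rw [Finset.prod_sigma']
  rw [show ∏ c : cells lam, f c.1.1 c.1.2 = ∏ c ∈ cells lam, f c.1 c.2 from
    Finset.prod_coe_sort (cells lam) (fun c => f c.1 c.2)]
  refine Finset.prod_nbij' (fun c => ⟨c.1, c.2⟩) (fun c => (c.1, c.2)) ?_ ?_ ?_ ?_ ?_
  · intro c hc
    simpa using mem_cells'.mp hc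
  · intro c hc
    exact mem_cells'.mpr (by simpa using hc)
  · simp
  · simp
  · simp

theorem Dat.Blk_eq {R : Type*} [CommRing R] (D : Dat lam V0 J k al be)
    (hlam : IsPartition lam) (hV : IsSSYT lam V0)
    (a b : Fin n) (ha : (a : ℕ) = k) (hb : (b : ℕ) = k + 1)
    (H : ∀ c : cells lam, 0 < J → c.1.2 = J → V0 c = a →
      ∃ d : cells lam, d.1.2 = J ∧ V0 d = b) (y : ℤ → R) (x : Fin n → R) :
    Blk lam V0 J a b y x =
      (∏ c : cells lam, if V0 c ≠ a ∧ V0 c ≠ b ∧ c.1.2 < J then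
        x (V0 c) + y (ysub (V0 c) c) else 1) *
      ∏ i : Fin n, ∑ m ∈ Icc (Lo al be i) (Up al be i), ∏ c ∈ Ico (al i) (be i),
        (if c < m then x a + y (k + 1 + (c : ℤ) - i) else x b + y (k + 1 + ((c + 1 : ℕ) : ℤ) - i)) := by
  rw [Finset.prod_univ_sum, Finset.mul_sum]
  unfold Blk
  symm
  refine Finset.sum_bij (fun m _ => Vm lam V0 a b al be m) ?_ ?_ ?_ ?_
  · intro m hm
    rw [Fintype.mem_piFinset] at hm
    simp only [mem_filter, mem_univ, true_and]
    exact D.Vm_mem hlam hV a b ha hb H m (fun i => mem_Icc.mp (hm i))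
  · intro m hm m' hm' h
    rw [Fintype.mem_piFinset] at hm hm'
    funext i
    exact le_antisymm
      (D.Vm_inj a b ha hb m' m (fun i => mem_Icc.mp (hm' i)) (fun i => mem_Icc.mp (hm i)) h.symm i)
      (D.Vm_inj a b ha hb m m' (fun i => mem_Icc.mp (hm i)) (fun i => mem_Icc.mp (hm' i)) h i)
  · intro V hVc
    simp only [mem_filter, mem_univ, true_and] at hVc
    obtain ⟨m, hm, e⟩ := D.Vm_surj hlam a b ha hb V hVc
    exact ⟨m, by rw [Fintype.mem_piFinset]; exact fun i => mem_Icc.mpr (hm i), e⟩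
  · intro m hm
    have e : ∀ i : Fin n, ∏ c ∈ Ico (al i) (be i),
        (if c < m i then x a + y (k + 1 + (c : ℤ) - i)
          else x b + y (k + 1 + ((c + 1 : ℕ) : ℤ) - i))
        = ∏ c ∈ range (lam i), if al i ≤ c ∧ c < be i then
          (if c < m i then x a + y (k + 1 + (c : ℤ) - i)
            else x b + y (k + 1 + ((c + 1 : ℕ) : ℤ) - i)) else 1 := by
      intro i
      rw [← Finset.prod_filter]
      refine prod_congr ?_ fun _ _ => rfl
      have := D.belam i
      ext c
      simp only [mem_Ico, mem_filter, mem_range]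
      omega
    rw [prod_congr rfl fun i _ => e i]
    rw [← prod_cells lam (fun i c => if al i ≤ c ∧ c < be i then
          (if c < m i then x a + y (k + 1 + (c : ℤ) - i)
            else x b + y (k + 1 + ((c + 1 : ℕ) : ℤ) - i)) else 1), ← prod_mul_distrib]
    refine prod_congr rfl fun c _ => ?_
    have na : V0 c = a → (V0 c : ℕ) = k := fun h => by rw [h, ha]
    have nb : V0 c = b → (V0 c : ℕ) = k + 1 := fun h => by rw [h, hb]
    have na' : (V0 c : ℕ) = k → V0 c = a := fun h => Fin.ext (by omega)
    have nb' : (V0 c : ℕ) = k + 1 → V0 c = b := fun h => Fin.ext (by omega)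
    rcases D.Vm_val a b ha hb m c with ⟨e, h⟩ | ⟨h1, h2, h3, h4, h5, h6⟩
    · rw [e]
      have : ¬ (al c.1.1 ≤ c.1.2 ∧ c.1.2 < be c.1.1) := by
        have := D.beJ c.1.1
        omega
      rw [if_neg this, mul_one]
      by_cases hJ : c.1.2 < J
      · rw [if_pos hJ, if_pos]
        refine ⟨fun h' => ?_, fun h' => ?_, hJ⟩
        · have := na h'; omega
        · have := nb h'; omega
      · rw [if_neg hJ, if_neg (by tauto)]
    · rw [if_pos h1, if_pos (⟨h4, h5⟩ : al c.1.1 ≤ c.1.2 ∧ c.1.2 < be c.1.1), if_neg, one_mul]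
      · rcases h6 with ⟨h6, h7, h8⟩ | ⟨h6, h7, h8⟩
        · rw [if_pos h6, h7]
          unfold ysub
          rw [ha]
        · rw [if_neg (by omega), h7]
          unfold ysub
          rw [hb]
          congr 2
          push_cast
          ring
      · rcases (by omega : (V0 c : ℕ) = k ∨ (V0 c : ℕ) = k + 1) with h | h
        · have := na' h; tauto
        · have := nb' h; tauto

theorem Dat.Blk_eq2 {R : Type*} [CommRing R] (D : Dat lam V0 J k al be)
    (hlam : IsPartition lam) (hV : IsSSYT lam V0)
    (a b : Fin n) (ha : (a : ℕ) = k) (hb : (b : ℕ) = k + 1)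
    (H : ∀ c : cells lam, 0 < J → c.1.2 = J → V0 c = a →
      ∃ d : cells lam, d.1.2 = J ∧ V0 d = b) (y : ℤ → R) (x : Fin n → R) :
    Blk lam V0 J a b y x =
      (∏ c : cells lam, if V0 c ≠ a ∧ V0 c ≠ b ∧ c.1.2 < J then
        x (V0 c) + y (ysub (V0 c) c) else 1) *
      ((∏ i ∈ range (n - 1), (∏ c ∈ Ico (al i) (be (i + 1)), (x a + y (k + 1 + (c : ℤ) - i))) *
        (∏ c ∈ Ico (al i) (be (i + 1)), (x b + y (k + 1 + (c : ℤ) - i)))) *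
      ∏ i : Fin n, ∑ m ∈ Icc (Lo al be i) (Up al be i),
        (∏ c ∈ Ico (Lo al be i) m, (x a + y (k + 1 + (c : ℤ) - i))) *
        (∏ c ∈ Ico m (Up al be i), (x b + y (k + 1 + ((c + 1 : ℕ) : ℤ) - i)))) := by
  rw [D.Blk_eq hlam hV a b ha hb H y x]
  congr 1
  have e : ∀ i : Fin n, _ := fun i => row_weight (x a) (x b) (fun c => y (k + 1 + (c : ℤ) - i))
    (al i) (Lo al be i) (Up al be i) (be i) (le_max_left _ _) (D.Up_le i)
  rw [prod_congr rfl fun i _ => e i, prod_mul_distrib, prod_mul_distrib]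
  congr 1
  rw [prod_mul_distrib]
  have hn : 0 < n := by have := a.2; omega
  obtain ⟨n', rfl⟩ : ∃ n', n = n' + 1 := ⟨n - 1, by omega⟩
  simp only [Nat.add_sub_cancel]
  congr 1
  · rw [Fin.prod_univ_eq_prod_range
      (fun i => ∏ c ∈ Ico (al i) (Lo al be i), (x a + y (k + 1 + (c : ℤ) - i))),
      Finset.prod_range_succ]
    have : Ico (al n') (Lo al be n') = ∅ := by
      unfold Lo
      rw [D.be0 (n' + 1) le_rfl]
      simp
    rw [this, prod_empty, mul_one]
    refine prod_congr rfl fun i _ => prod_congr ?_ fun _ _ => rfl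
    ext c
    simp only [mem_Ico, Lo]
    omega
  · rw [Fin.prod_univ_eq_prod_range
      (fun i => ∏ c ∈ Ico (Up al be i) (be i), (x b + y (k + 1 + ((c + 1 : ℕ) : ℤ) - i))),
      Finset.prod_range_succ']
    have : Ico (Up al be 0) (be 0) = ∅ := by
      simp [Up]
    rw [this, prod_empty, mul_one]
    refine prod_congr rfl fun i _ => prod_congr ?_ fun c _ => ?_
    · ext c
      simp only [mem_Ico, Up, Nat.succ_ne_zero, if_false, Nat.add_sub_cancel]
      omega
    · congr 2
      push_cast
      ring

theorem Blk_symm {R : Type*} [CommRing R] [IsDomain R]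
    (hlam : IsPartition lam) (hV : IsSSYT lam V0)
    (a b : Fin n) (hab : (b : ℕ) = a + 1)
    (H : ∀ c : cells lam, 0 < J → c.1.2 = J → V0 c = a →
      ∃ d : cells lam, d.1.2 = J ∧ V0 d = b) (y : ℤ → R) (x : Fin n → R) :
    Blk lam V0 J a b y (fun i => x (Equiv.swap a b i)) = Blk lam V0 J a b y x := by
  obtain ⟨al, be, D⟩ := Dat.ex hV J a
  rw [D.Blk_eq2 hlam hV a b rfl hab H, D.Blk_eq2 hlam hV a b rfl hab H]
  simp only [Equiv.swap_apply_left, Equiv.swap_apply_right]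
  congr 1
  · refine prod_congr rfl fun c _ => ?_
    split_ifs with h
    · rw [Equiv.swap_apply_of_ne_of_ne h.1 h.2.1]
    · rfl
  congr 1
  · exact prod_congr rfl fun c _ => mul_comm _ _
  · refine prod_congr rfl fun i _ => ?_
    exact sym_sum' (x b) (x a) (fun c => y (((a : ℕ) : ℤ) + 1 + (c : ℤ) - i)) _ _
      (D.Lo_le_Up hlam hV i)

end

/-- action of permutations on x-variables -/
noncomputable def act (n r : ℕ) (s : Equiv.Perm (Fin n)) :
    MvPolynomial (Fin n ⊕ Fin r × ℤ) ℤ →ₐ[ℤ] MvPolynomial (Fin n ⊕ Fin r × ℤ) ℤ :=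
  rename (Sum.map s id)

theorem act_inl {n r : ℕ} (s : Equiv.Perm (Fin n)) (i : Fin n) :
    act n r s (X (Sum.inl i)) = X (Sum.inl (s i)) := by simp [act]

theorem act_inr {n r : ℕ} (s : Equiv.Perm (Fin n)) (p : Fin r × ℤ) :
    act n r s (X (Sum.inr p)) = X (Sum.inr p) := by simp [act]

theorem act_rename {n r : ℕ} (s : Equiv.Perm (Fin n)) (q : MvPolynomial (Fin r × ℤ) ℤ) :
    act n r s (rename Sum.inr q) = rename Sum.inr q := by
  simp only [act, rename_rename]
  rfl

theorem act_mul {n r : ℕ} (s t : Equiv.Perm (Fin n)) (p) :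
    act n r (s * t) p = act n r s (act n r t p) := by
  simp only [act, rename_rename]
  congr 2
  funext z
  cases z <;> simp

/-- antisymmetrizer -/
noncomputable def Alt (n r : ℕ) (p : MvPolynomial (Fin n ⊕ Fin r × ℤ) ℤ) :
    MvPolynomial (Fin n ⊕ Fin r × ℤ) ℤ :=
  ∑ s : Equiv.Perm (Fin n), Equiv.Perm.sign s • act n r s p

theorem Alt_sum {n r : ℕ} {ι : Type*} (S : Finset ι) (f : ι → MvPolynomial (Fin n ⊕ Fin r × ℤ) ℤ) :
    Alt n r (∑ i ∈ S, f i) = ∑ i ∈ S, Alt n r (f i) := by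
  unfold Alt
  rw [Finset.sum_comm]
  refine sum_congr rfl fun s _ => ?_
  rw [map_sum, Finset.smul_sum]

theorem Alt_mul {n r : ℕ} (p F : MvPolynomial (Fin n ⊕ Fin r × ℤ) ℤ)
    (h : ∀ s, act n r s F = F) : Alt n r (p * F) = Alt n r p * F := by
  unfold Alt
  rw [Finset.sum_mul]
  refine sum_congr rfl fun s _ => ?_
  rw [map_mul, h, smul_mul_assoc]

theorem Alt_zero {n r : ℕ} (p : MvPolynomial (Fin n ⊕ Fin r × ℤ) ℤ) (a b : Fin n) (hab : a ≠ b)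
    (h : act n r (Equiv.swap a b) p = p) : Alt n r p = 0 := by
  unfold Alt
  refine Finset.sum_involution (fun s _ => s * Equiv.swap a b) ?_ ?_ ?_ ?_
  · intro s _
    rw [act_mul, h, Equiv.Perm.sign_mul, Equiv.Perm.sign_swap hab]
    simp
  · intro s _ _ h'
    have : Equiv.swap a b = 1 := by simpa using h'
    exact hab (Equiv.swap_eq_one_iff.mp this)
  · intro s _; simp
  · intro s _
    simp [mul_assoc]

theorem avand_eq (n r : ℕ) (xi : Fin n → ℕ) :
    avand n r xi = Alt n r (∏ i, X (Sum.inl i) ^ xi i) := by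
  unfold avand Alt
  rw [Matrix.det_apply]
  refine sum_congr rfl fun s _ => ?_
  simp [act_inl, map_prod]

theorem act_all {n r : ℕ} (F : MvPolynomial (Fin n ⊕ Fin r × ℤ) ℤ)
    (h : ∀ a b : Fin n, (b : ℕ) = a + 1 → act n r (Equiv.swap a b) F = F)
    (s : Equiv.Perm (Fin n)) : act n r s F = F := by
  rcases n with _ | n
  · have : s = 1 := Subsingleton.elim _ _
    subst this
    unfold act
    have e : (Sum.map (1 : Equiv.Perm (Fin 0)) id : Fin 0 ⊕ Fin r × ℤ → _) = id := by
      funext z; cases z <;> rfl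
    rw [Equiv.Perm.coe_one] at *
    rw [Sum.map_id_id, rename_id]; rfl
  · have hs : s ∈ Submonoid.closure
        (Set.range fun i : Fin n => Equiv.swap i.castSucc i.succ) := by
      rw [Equiv.Perm.mclosure_swap_castSucc_succ]; trivial
    induction hs using Submonoid.closure_induction with
    | mem x hx =>
      obtain ⟨i, rfl⟩ := hx
      exact h _ _ (by simp)
    | one =>
      unfold act
      rw [Equiv.Perm.coe_one, Sum.map_id_id, rename_id]; rfl
    | mul x y _ _ hx hy => rw [act_mul, hy, hx]

theorem sum_zero_of_fibers {ι κ R : Type*} [AddCommMonoid R] (S : Finset ι) (f : ι → R)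
    (key : ι → κ) (h : ∀ t ∈ S, ∃ S' : Finset ι,
      (∀ u, u ∈ S' ↔ u ∈ S ∧ key u = key t) ∧ ∑ u ∈ S', f u = 0) :
    ∑ t ∈ S, f t = 0 := by
  rw [← Finset.sum_fiberwise_of_maps_to (t := S.image key) (g := key)
    (fun x hx => mem_image_of_mem _ hx)]
  refine sum_eq_zero fun y hy => ?_
  obtain ⟨t, ht, rfl⟩ := mem_image.mp hy
  obtain ⟨S', h1, h2⟩ := h t ht
  rw [← h2]
  refine sum_congr ?_ fun _ _ => rfl
  ext u
  rw [h1, mem_filter]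

theorem sum_bars {C A R : Type*} [Fintype C] [DecidableEq C] [Fintype A] [CommRing R]
    (P : (C → A) → Prop) (B : C → Finset Bool) (W : C → A → Bool → R) :
    ∑ t ∈ univ.filter (fun t : C → A × Bool => P (fun c => (t c).1) ∧ ∀ c, (t c).2 ∈ B c),
      ∏ c, W c (t c).1 (t c).2 = ∑ V ∈ univ.filter P, ∏ c, ∑ z ∈ B c, W c (V c) z := by
  simp_rw [Finset.prod_univ_sum, Finset.sum_sigma']
  refine Finset.sum_bij' (fun t _ => ⟨fun c => (t c).1, fun c => (t c).2⟩)
    (fun p _ => fun c => (p.1 c, p.2 c)) ?_ ?_ ?_ ?_ ?_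
  · intro t ht
    simpa [Fintype.mem_piFinset] using ht
  · intro p hp
    simpa [Fintype.mem_piFinset] using hp
  · intro t _; rfl
  · intro p _; rfl
  · intro t _; rfl

theorem factSchur_symm {n r : ℕ} (i : Fin r) (lam : Fin n → ℕ) (hlam : IsPartition lam)
    (s : Equiv.Perm (Fin n)) : act n r s (factSchur n r i lam) = factSchur n r i lam := by
  apply act_all
  intro a b hab
  rw [← sub_eq_zero]
  unfold factSchur
  rw [map_sum, ← Finset.sum_sub_distrib]
  refine sum_zero_of_fibers _ _ (fun V => fun c => if V c = b then a else V c) ?_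
  intro V0 hV0
  rw [mem_filter] at hV0
  have hV := hV0.2
  have hJ : ∀ c : cells lam, c.1.2 < univ.sup lam := fun c =>
    lt_of_lt_of_le (mem_cells'.mp c.2) (Finset.le_sup (f := lam) (mem_univ _))
  refine ⟨univ.filter (inCl lam V0 (univ.sup lam) a b), fun V => ?_, ?_⟩
  · simp only [mem_filter, mem_univ, true_and, inCl, hJ, funext_iff]
    refine and_congr_right fun _ => forall_congr' fun c => ?_
    have : a ≠ b := fun h => by rw [h] at hab; omega
    grind
  rw [Finset.sum_sub_distrib, ← map_sum, sub_eq_zero]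
  have B := Blk_symm (R := MvPolynomial (Fin n ⊕ Fin r × ℤ) ℤ) (J := univ.sup lam) hlam hV a b hab
    (fun c _ h2 _ => absurd h2 (hJ c).ne) (fun z => X (Sum.inr (i, z))) (fun i => X (Sum.inl i))
  unfold Blk at B
  simp only [hJ, if_true] at B
  refine Eq.trans ?_ B
  rw [map_sum]
  refine sum_congr rfl fun V _ => ?_
  rw [map_prod]
  refine prod_congr rfl fun c _ => ?_
  rw [map_add, act_inl, act_inr]

theorem yam_of_cols (f : ℕ → List ℕ) (hf : ∀ t, (f t).Pairwise (· < ·)) (N : ℕ)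
    (h : ∀ s ≤ N, ∀ k, ((List.range s).flatMap f).count (k + 1) ≤ ((List.range s).flatMap f).count k) :
    IsYam ((List.range N).flatMap f) := by
  induction N with
  | zero => intro t k; simp
  | succ N ih =>
    intro t k
    have ih' := ih (fun s hs => h s (by omega))
    rw [List.range_succ, List.flatMap_append, List.flatMap_singleton, List.take_append,
      List.count_append, List.count_append]
    rcases Nat.le_total t ((List.range N).flatMap f).length with hl | hl
    · rw [Nat.sub_eq_zero_of_le hl]
      simpa using ih' t k
    · rw [List.take_of_length_le hl]
      set u := t - ((List.range N).flatMap f).length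
      have hN := h N (by omega) k
      have hN1 := h (N + 1) le_rfl k
      rw [List.range_succ, List.flatMap_append, List.flatMap_singleton,
        List.count_append, List.count_append] at hN1
      by_cases hk : k + 1 ∈ (f N).take u
      · have e : (f N).take u ++ (f N).drop u = f N := List.take_append_drop u (f N)
        have hp := hf N
        rw [← e, List.pairwise_append] at hp
        have hq : k ∉ (f N).drop u := fun hq => by
          have := hp.2.2 _ hk _ hq
          omega
        rw [← e, List.count_append, List.count_append, List.count_eq_zero_of_not_mem hq] at hN1
        omega
      · rw [List.count_eq_zero_of_not_mem hk]
        omega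

theorem cols_of_yam (f : ℕ → List ℕ) (N : ℕ) (h : IsYam ((List.range N).flatMap f)) (s : ℕ)
    (hs : s ≤ N) (k : ℕ) :
    ((List.range s).flatMap f).count (k + 1) ≤ ((List.range s).flatMap f).count k := by
  have e : List.range N = List.range s ++ (List.range (N - s)).map (s + ·) := by
    rw [← List.range_add]; congr 1; omega
  have := h ((List.range s).flatMap f).length k
  rw [e, List.flatMap_append, List.take_left' rfl] at this
  exact this

/-- column word -/
noncomputable def col1 {n : ℕ} (lam : Fin n → ℕ) (T : cells lam → Fin n × Bool) (j : ℕ) : List ℕ :=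
    (List.finRange n).filterMap fun i =>
      if h : (i, j) ∈ cells lam then
        (if (T ⟨(i, j), h⟩).2 = false then some ((T ⟨(i, j), h⟩).1 : ℕ) else none)
      else none

theorem mem_col1 {n : ℕ} {lam : Fin n → ℕ} {T : cells lam → Fin n × Bool} {j v : ℕ} :
    v ∈ col1 lam T j ↔ ∃ c : cells lam, c.1.2 = j ∧ (T c).2 = false ∧ ((T c).1 : ℕ) = v := by
  unfold col1
  rw [List.mem_filterMap]
  constructor
  · rintro ⟨i, _, h⟩
    split_ifs at h with h1 h2
    · exact ⟨⟨(i, j), h1⟩, rfl, h2, by simpa using h⟩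
  · rintro ⟨⟨⟨i, j'⟩, hc⟩, h1, h2, h3⟩
    simp only at h1
    subst h1
    exact ⟨i, List.mem_finRange i, by simp [hc, h2, h3]⟩

theorem col1_sorted {n : ℕ} {lam : Fin n → ℕ} {T : cells lam → Fin n × Bool}
    (hT : IsBarred lam T) (j : ℕ) : (col1 lam T j).Pairwise (· < ·) := by
  unfold col1
  rw [List.pairwise_filterMap]
  refine List.Pairwise.imp ?_ (List.pairwise_lt_finRange n)
  intro i i' hii v hv v' hv'
  split_ifs at hv with h1 h2
  split_ifs at hv' with h1' h2'
  · have := hT.2 ⟨_, h1⟩ ⟨_, h1'⟩ rfl hii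
    rw [Fin.lt_def] at this
    simp at hv hv'
    omega

theorem prod_filterMap {α β R : Type*} [CommMonoid R] (f : α → Option β) (g : β → R) (l : List α) :
    ((l.filterMap f).map g).prod = (l.map fun x => (f x).elim 1 g).prod := by
  induction l with
  | nil => rfl
  | cons x l ih =>
    rw [List.filterMap_cons]
    cases h : f x <;> simp [h, ih]

theorem col1_prod {n : ℕ} {R : Type*} [CommRing R] (lam : Fin n → ℕ)
    (T : cells lam → Fin n × Bool) (j : ℕ) (g : ℕ → R) :
    ((col1 lam T j).map g).prod =
      ∏ c : cells lam, if c.1.2 = j ∧ (T c).2 = false then g (T c).1 else 1 := by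
  unfold col1
  rw [prod_filterMap, ← Fin.prod_univ_def]
  have e : ∀ c : cells lam, (if c.1.2 = j ∧ (T c).2 = false then g (T c).1 else 1) =
      (fun (i : Fin n) (z : ℕ) => if z = j then (if h : (i, z) ∈ cells lam then
        (if (T ⟨(i, z), h⟩).2 = false then g (T ⟨(i, z), h⟩).1 else 1) else 1) else 1) c.1.1 c.1.2 := by
    rintro ⟨⟨i, z⟩, hc⟩
    simp only [hc, dif_pos]
    split_ifs <;> first | rfl | tauto
  rw [prod_congr rfl fun c _ => e c, prod_cells lam (fun (i : Fin n) (z : ℕ) =>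
      if z = j then (if h : (i, z) ∈ cells lam then
        (if (T ⟨(i, z), h⟩).2 = false then g (T ⟨(i, z), h⟩).1 else 1) else 1) else 1)]
  refine prod_congr rfl fun i _ => ?_
  rw [Finset.prod_ite_eq']
  simp only [mem_range]
  by_cases h : j < lam i
  · have h' : (i, j) ∈ cells lam := mem_cells'.mpr h
    rw [if_pos h, dif_pos h', dif_pos h']
    split_ifs <;> rfl
  · have h' : (i, j) ∉ cells lam := fun h' => h (mem_cells'.mp h')
    rw [if_neg h, dif_neg h']
    rfl

/-- column at time `t` -/
noncomputable def colAt {n r : ℕ} (M : ℕ) (lam : Fin r → Fin n → ℕ)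
    (T : (i : Fin r) → cells (lam i) → Fin n × Bool) (t : ℕ) : List ℕ :=
  if h : t / M < r then col1 (lam ⟨t / M, h⟩) (T ⟨t / M, h⟩) (M - 1 - t % M) else []

/-- reading time of a column -/
def tm (M : ℕ) (i j : ℕ) : ℕ := i * M + (M - 1 - j)

theorem tm_eq {M i j s : ℕ} (hj : j < M) : tm M i j = s ↔ i = s / M ∧ j = M - 1 - s % M := by
  unfold tm
  have hM : 0 < M := by omega
  constructor
  · rintro rfl
    have h1 : (i * M + (M - 1 - j)) / M = i := by
      rw [mul_comm, Nat.mul_add_div hM, Nat.div_eq_of_lt (by omega), add_zero]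
    have h2 : (i * M + (M - 1 - j)) % M = M - 1 - j := by
      rw [mul_comm, Nat.mul_add_mod, Nat.mod_eq_of_lt (by omega)]
    rw [h1, h2]
    omega
  · rintro ⟨rfl, rfl⟩
    have := Nat.mod_lt s hM
    have e := Nat.div_add_mod s M
    rw [mul_comm] at e
    omega

theorem colAt_sorted {n r : ℕ} {M : ℕ} {lam : Fin r → Fin n → ℕ}
    {T : (i : Fin r) → cells (lam i) → Fin n × Bool} (hT : IsBarredSkew lam T) (t : ℕ) :
    (colAt M lam T t).Pairwise (· < ·) := by
  unfold colAt
  split_ifs with h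
  · exact col1_sorted (hT _) _
  · exact List.Pairwise.nil

theorem range_mul (r M : ℕ) : List.range (r * M) =
    (List.finRange r).flatMap fun i : Fin r => (List.range M).map (fun u => (i : ℕ) * M + u) := by
  induction r with
  | zero => simp
  | succ r ih =>
    rw [List.finRange_succ_last, List.flatMap_append, List.flatMap_map, List.flatMap_singleton]
    rw [Nat.succ_mul, List.range_add, ih]
    simp

theorem colWord_eq {n r : ℕ} {M : ℕ} {lam : Fin r → Fin n → ℕ}
    (hM : ∀ i j, lam i j ≤ M) (T : (i : Fin r) → cells (lam i) → Fin n × Bool) :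
    colWord lam T = (List.range (r * M)).flatMap (colAt M lam T) := by
  unfold colWord
  rw [range_mul, List.flatMap_assoc]
  congr 1
  funext i
  rw [List.flatMap_map]
  have hsup : univ.sup (lam i) ≤ M := Finset.sup_le fun j _ => hM i j
  have e1 : colWord1 (lam i) (T i) = (List.range M).reverse.flatMap (col1 (lam i) (T i)) := by
    have e : List.range M = List.range (univ.sup (lam i)) ++
        (List.range (M - univ.sup (lam i))).map (univ.sup (lam i) + ·) := by
      rw [← List.range_add]; congr 1; omega
    rw [e, List.reverse_append, List.flatMap_append]
    have : List.flatMap (col1 (lam i) (T i))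
      ((List.range (M - univ.sup (lam i))).map (univ.sup (lam i) + ·)).reverse = [] := by
      rw [List.flatMap_eq_nil_iff]
      intro j hj
      rw [List.mem_reverse, List.mem_map] at hj
      obtain ⟨u, _, rfl⟩ := hj
      rw [List.eq_nil_iff_forall_not_mem]
      intro v hv
      obtain ⟨c, hc, _⟩ := mem_col1.mp hv
      have h1 := mem_cells'.mp c.2
      have h2 := Finset.le_sup (f := lam i) (mem_univ c.1.1)
      omega
    rw [this, List.nil_append]
    rfl
  have e2 : (List.range M).reverse = (List.range M).map (fun u => M - 1 - u) := by
    apply List.ext_getElem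
    · simp
    · intro u h1 h2
      simp
  rw [e1, e2, List.flatMap_map]
  apply List.flatMap_congr
  intro u hu
  rw [List.mem_range] at hu
  have h1 : ((i : ℕ) * M + u) / M = i := by
      rw [mul_comm, Nat.mul_add_div (by omega), Nat.div_eq_of_lt (by omega), add_zero]
  have h2 : ((i : ℕ) * M + u) % M = u := by
      rw [mul_comm, Nat.mul_add_mod, Nat.mod_eq_of_lt (by omega)]
  unfold colAt
  have hlt : ((i : ℕ) * M + u) / M < r := by rw [h1]; exact i.2
  have hf : (⟨((i : ℕ) * M + u) / M, hlt⟩ : Fin r) = i := Fin.ext h1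
  rw [dif_pos hlt, hf, h2]

theorem colAt_prod {n r : ℕ} {R : Type*} [CommRing R] {M : ℕ} (lam : Fin r → Fin n → ℕ)
    (hM : ∀ i j, lam i j ≤ M)
    (T : (i : Fin r) → cells (lam i) → Fin n × Bool) (s : ℕ) (g : ℕ → R) :
    ((colAt M lam T s).map g).prod =
      ∏ i, ∏ c : cells (lam i), if tm M i c.1.2 = s ∧ (T i c).2 = false then g (T i c).1 else 1 := by
  have hc : ∀ i, ∀ c : cells (lam i), c.1.2 < M := fun i c =>
    lt_of_lt_of_le (mem_cells'.mp c.2) (hM _ _)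
  unfold colAt
  split_ifs with h
  · rw [Finset.prod_eq_single (⟨s / M, h⟩ : Fin r)]
    · rw [col1_prod]
      refine prod_congr rfl fun c _ => ?_
      have := tm_eq (s := s) (i := s / M) (hc _ c)
      simp only [this, true_and]
    · intro i _ hi
      refine prod_eq_one fun c _ => ?_
      rw [if_neg]
      rw [tm_eq (hc _ c)]
      rintro ⟨⟨h1, _⟩, _⟩
      exact hi (Fin.ext h1)
    · simp
  · symm
    simp only [List.map_nil, List.prod_nil]
    refine prod_eq_one fun i _ => prod_eq_one fun c _ => ?_
    rw [if_neg]
    rw [tm_eq (hc _ c)]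
    rintro ⟨⟨h1, _⟩, _⟩
    exact h (h1 ▸ i.2)

theorem cols_prod {n r : ℕ} {R : Type*} [CommRing R] {M : ℕ} (lam : Fin r → Fin n → ℕ)
    (hM : ∀ i j, lam i j ≤ M)
    (T : (i : Fin r) → cells (lam i) → Fin n × Bool) (s : ℕ) (g : ℕ → R) :
    ((((List.range s).flatMap (colAt M lam T))).map g).prod =
      ∏ i, ∏ c : cells (lam i), if tm M i c.1.2 < s ∧ (T i c).2 = false then g (T i c).1 else 1 := by
  induction s with
  | zero => simp
  | succ s ih =>
    rw [List.range_succ, List.flatMap_append, List.flatMap_singleton, List.map_append,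
      List.prod_append, ih, colAt_prod lam hM, ← prod_mul_distrib]
    refine prod_congr rfl fun i _ => ?_
    rw [← prod_mul_distrib]
    refine prod_congr rfl fun c _ => ?_
    by_cases h : (T i c).2 = false
    · simp only [h, and_true]
      rcases lt_trichotomy (tm M i c.1.2) s with h1 | h1 | h1
      · rw [if_pos h1, if_neg (by omega), if_pos (by omega), mul_one]
      · rw [if_neg (by omega), if_pos h1, if_pos (by omega), one_mul]
      · rw [if_neg (by omega), if_neg (by omega), if_neg (by omega), one_mul]
    · simp [h]

theorem cols_prod_count {n r : ℕ} {R : Type*} [CommRing R] {M : ℕ} (lam : Fin r → Fin n → ℕ)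
    (T : (i : Fin r) → cells (lam i) → Fin n × Bool) (s : ℕ) (g : ℕ → R) :
    ((((List.range s).flatMap (colAt M lam T))).map g).prod =
      ∏ v : Fin n, g v ^ ((List.range s).flatMap (colAt M lam T)).count (v : ℕ) := by
  set l := (List.range s).flatMap (colAt M lam T) with hl
  have hlt : ∀ v ∈ l, v < n := by
    intro v hv
    rw [hl, List.mem_flatMap] at hv
    obtain ⟨t, _, ht⟩ := hv
    unfold colAt at ht
    split_ifs at ht with h
    · obtain ⟨c, _, _, rfl⟩ := mem_col1.mp ht
      exact (T _ c).1.2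
    · simp at ht
  rw [Fin.prod_univ_eq_prod_range (fun v => g v ^ l.count v), Finset.prod_list_map_count]
  refine Finset.prod_subset (fun v hv => ?_) (fun v _ hv => ?_)
  · rw [List.mem_toFinset] at hv
    exact mem_range.mpr (hlt v hv)
  · rw [List.mem_toFinset] at hv
    rw [List.count_eq_zero_of_not_mem hv, pow_zero]

theorem col1_congr {n : ℕ} {lam : Fin n → ℕ} {T T' : cells lam → Fin n × Bool} {j : ℕ}
    (h : ∀ c : cells lam, c.1.2 = j → T c = T' c) : col1 lam T j = col1 lam T' j := by
  unfold col1
  apply List.filterMap_congr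
  intro i _
  by_cases hc : (i, j) ∈ cells lam
  · rw [dif_pos hc, dif_pos hc, h ⟨(i, j), hc⟩ rfl]
  · rw [dif_neg hc, dif_neg hc]

section
variable {n r : ℕ} {M : ℕ} {lam : Fin r → Fin n → ℕ}

theorem colAt_congr (hM : ∀ i j, lam i j ≤ M) {T T' : (i : Fin r) → cells (lam i) → Fin n × Bool}
    {s : ℕ} (h : ∀ i, ∀ c : cells (lam i), tm M i c.1.2 = s → T i c = T' i c) :
    colAt M lam T s = colAt M lam T' s := by
  unfold colAt
  split_ifs with hs
  · apply col1_congr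
    intro c hc
    apply h
    rw [tm_eq (lt_of_lt_of_le (mem_cells'.mp c.2) (hM _ _))]
    exact ⟨rfl, hc⟩
  · rfl

theorem cols_congr (hM : ∀ i j, lam i j ≤ M) {T T' : (i : Fin r) → cells (lam i) → Fin n × Bool}
    {s : ℕ} (h : ∀ i, ∀ c : cells (lam i), tm M i c.1.2 < s → T i c = T' i c) :
    (List.range s).flatMap (colAt M lam T) = (List.range s).flatMap (colAt M lam T') := by
  apply List.flatMap_congr
  intro t ht
  rw [List.mem_range] at ht
  exact colAt_congr hM fun i c hc => h i c (by omega)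

/-- number of unbarred `k` read before time `s` -/
noncomputable def cnt (M : ℕ) (lam : Fin r → Fin n → ℕ)
    (T : (i : Fin r) → cells (lam i) → Fin n × Bool) (s k : ℕ) : ℕ :=
  ((List.range s).flatMap (colAt M lam T)).count k

theorem yam_iff (hM : ∀ i j, lam i j ≤ M) {T : (i : Fin r) → cells (lam i) → Fin n × Bool}
    (hT : IsBarredSkew lam T) :
    IsYam (colWord lam T) ↔ ∀ s ≤ r * M, ∀ k, cnt M lam T s (k + 1) ≤ cnt M lam T s k := by
  rw [colWord_eq hM]
  exact ⟨fun h s hs k => cols_of_yam _ _ h s hs k, fun h => yam_of_cols _ (colAt_sorted hT) _ h⟩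

/-- first failure at column `s`, letter `k` -/
def Fst (M : ℕ) (lam : Fin r → Fin n → ℕ) (T : (i : Fin r) → cells (lam i) → Fin n × Bool)
    (s k : ℕ) : Prop :=
  s + 1 ≤ r * M ∧ cnt M lam T (s + 1) k < cnt M lam T (s + 1) (k + 1) ∧
  (∀ k' < k, cnt M lam T (s + 1) (k' + 1) ≤ cnt M lam T (s + 1) k') ∧
  ∀ s' ≤ s, ∀ k', cnt M lam T s' (k' + 1) ≤ cnt M lam T s' k'

theorem Fst.uniq {T : (i : Fin r) → cells (lam i) → Fin n × Bool} {s k s' k' : ℕ}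
    (h : Fst M lam T s k) (h' : Fst M lam T s' k') : s = s' ∧ k = k' := by
  obtain ⟨h0, h1, h2, h3⟩ := h
  obtain ⟨g0, g1, g2, g3⟩ := h'
  have e : s = s' := by
    by_contra hne
    rcases Nat.lt_or_gt_of_ne hne with hlt | hlt
    · have := g3 (s + 1) (by omega) k; omega
    · have := h3 (s' + 1) (by omega) k'; omega
  subst e
  refine ⟨rfl, ?_⟩
  by_contra hne
  rcases Nat.lt_or_gt_of_ne hne with hlt | hlt
  · have := g2 k hlt; omega
  · have := h2 k' hlt; omega

theorem Fst.exists {T : (i : Fin r) → cells (lam i) → Fin n × Bool}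
    (h : ¬ ∀ s ≤ r * M, ∀ k, cnt M lam T s (k + 1) ≤ cnt M lam T s k) :
    ∃ p : ℕ × ℕ, Fst M lam T p.1 p.2 := by
  push Not at h
  have hs := Nat.find_spec h
  have hm := fun s (h' : s < Nat.find h) => Nat.find_min h h'
  set s := Nat.find h
  obtain ⟨h1, h2⟩ := hs
  have hk := Nat.find_spec h2
  have hkm := fun s (h' : s < Nat.find h2) => Nat.find_min h2 h'
  set k := Nat.find h2
  rcases hs0 : s with _ | s'
  · rw [hs0] at hk; simp [cnt] at hk
  · refine ⟨(s', k), ?_⟩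
    rw [hs0] at h1 hk hkm
    refine ⟨h1, hk, fun k' hk' => not_lt.mp (hkm k' hk'), fun s'' hs'' k' => ?_⟩
    have := hm s'' (by omega)
    push Not at this
    exact this (by omega) k'

theorem Fst.congr (hM : ∀ i j, lam i j ≤ M) {T T' : (i : Fin r) → cells (lam i) → Fin n × Bool}
    {s k : ℕ} (h : ∀ i, ∀ c : cells (lam i), tm M i c.1.2 ≤ s → T i c = T' i c)
    (hF : Fst M lam T s k) : Fst M lam T' s k := by
  have e : ∀ s' ≤ s + 1, ∀ k, cnt M lam T s' k = cnt M lam T' s' k := by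
    intro s' hs' k
    unfold cnt
    rw [cols_congr hM fun i c hc => h i c (by omega)]
  obtain ⟨h0, h1, h2, h3⟩ := hF
  refine ⟨h0, ?_, ?_, ?_⟩
  · rw [← e _ le_rfl, ← e _ le_rfl]; exact h1
  · intro k' hk'; rw [← e _ le_rfl, ← e _ le_rfl]; exact h2 k' hk'
  · intro s' hs' k'; rw [← e _ (by omega), ← e _ (by omega)]; exact h3 s' hs' k'

theorem Fst.props {T : (i : Fin r) → cells (lam i) → Fin n × Bool} (hT : IsBarredSkew lam T)
    {s k : ℕ} (h : Fst M lam T s k) :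
    cnt M lam T (s + 1) (k + 1) = cnt M lam T (s + 1) k + 1 ∧ k + 1 ∈ colAt M lam T s := by
  obtain ⟨h0, h1, h2, h3⟩ := h
  have e : ∀ k, cnt M lam T (s + 1) k = cnt M lam T s k + (colAt M lam T s).count k := by
    intro k
    unfold cnt
    rw [List.range_succ, List.flatMap_append, List.flatMap_singleton, List.count_append]
  have nd : (colAt M lam T s).Nodup := (colAt_sorted hT s).imp (fun h => h.ne)
  have h4 := h3 s le_rfl k
  have h5 := List.nodup_iff_count_le_one.mp nd (k + 1)
  have h6 := e k
  have h7 := e (k + 1)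
  refine ⟨by omega, ?_⟩
  by_contra hmem
  rw [List.count_eq_zero_of_not_mem hmem] at h7
  omega

/-- weight of one entry -/
noncomputable def W (n r : ℕ) (i : Fin r) (c : Fin n × ℕ) (v : Fin n) (z : Bool) :
    MvPolynomial (Fin n ⊕ Fin r × ℤ) ℤ :=
  if z = true then X (Sum.inr (i, ysub v c)) else X (Sum.inl v)

/-- weight of a barred tableau -/
noncomputable def wt (lam : Fin r → Fin n → ℕ)
    (T : (i : Fin r) → cells (lam i) → Fin n × Bool) : MvPolynomial (Fin n ⊕ Fin r × ℤ) ℤ :=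
  ∏ i, ∏ c : cells (lam i), W n r i c (T i c).1 (T i c).2

/-- x^rho -/
noncomputable def xrho (n r : ℕ) : MvPolynomial (Fin n ⊕ Fin r × ℤ) ℤ :=
  ∏ i, X (Sum.inl i) ^ rhoPart n i

theorem wt_eq (T : (i : Fin r) → cells (lam i) → Fin n × Bool) :
    wt lam T = (∏ k, X (Sum.inl k) ^ contentT lam T k) * rename Sum.inr (cT lam T) := by
  unfold wt contentT cT
  simp_rw [← Finset.prod_pow_eq_pow_sum]
  rw [Finset.prod_comm, map_prod, ← prod_mul_distrib]
  refine prod_congr rfl fun i _ => ?_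
  have e1 : ∏ k, (X (Sum.inl k) : MvPolynomial (Fin n ⊕ Fin r × ℤ) ℤ) ^ content1 (lam i) (T i) k
      = ∏ c : cells (lam i), if (T i c).2 = false then X (Sum.inl (T i c).1) else 1 := by
    unfold content1
    simp_rw [← Finset.prod_const, Finset.prod_filter]
    rw [Finset.prod_comm]
    refine prod_congr rfl fun c _ => ?_
    by_cases h : (T i c).2 = false
    · rw [if_pos h, Finset.prod_eq_single (T i c).1]
      · rw [if_pos]; exact Prod.ext rfl h
      · intro k _ hk
        rw [if_neg]
        intro h'
        rw [h'] at hk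
        exact hk rfl
      · simp
    · rw [if_neg h]
      refine prod_eq_one fun k _ => ?_
      rw [if_neg]
      intro h'
      rw [h'] at h
      exact h rfl
  rw [e1]
  unfold cT1
  rw [Finset.prod_filter, map_prod, ← prod_mul_distrib]
  refine prod_congr rfl fun c _ => ?_
  unfold W
  cases h : (T i c).2 <;> simp

theorem term_eq (T : (i : Fin r) → cells (lam i) → Fin n × Bool) :
    rename Sum.inr (cT lam T) * avand n r (fun k => rhoPart n k + contentT lam T k)
      = Alt n r (xrho n r * wt lam T) := by
  rw [wt_eq, ← mul_assoc, Alt_mul _ _ (fun s => act_rename s _), avand_eq, mul_comm]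
  simp_rw [pow_add, prod_mul_distrib]
  rfl

theorem full_sum : ∑ T ∈ univ.filter (fun T : (i : Fin r) → cells (lam i) → Fin n × Bool =>
    IsBarredSkew lam T), wt lam T = ∏ i, factSchur n r i (lam i) := by
  have e : ∀ i, factSchur n r i (lam i) = ∑ t ∈ univ.filter (IsBarred (lam i)),
      ∏ c : cells (lam i), W n r i c (t c).1 (t c).2 := by
    intro i
    have := sum_bars (C := cells (lam i)) (IsSSYT (lam i)) (fun _ => univ)
      (fun c v z => W n r i c v z)
    unfold factSchur
    refine Eq.trans ?_ (this.symm.trans ?_)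
    · refine sum_congr rfl fun V _ => prod_congr rfl fun c _ => ?_
      simp [W, add_comm]
    · refine sum_congr ?_ fun _ _ => rfl
      ext t
      simp only [mem_filter, mem_univ, true_and, implies_true, and_true]
      rfl
  rw [prod_congr rfl fun i _ => e i, Finset.prod_univ_sum]
  refine sum_congr ?_ fun _ _ => rfl
  ext T
  rw [mem_filter, Fintype.mem_piFinset]
  simp only [mem_filter, mem_univ, true_and]
  rfl

/-- bar choices -/
noncomputable def Bs (lam : Fin r → Fin n → ℕ) (T0 : (i : Fin r) → cells (lam i) → Fin n × Bool)
    (J : Fin r → ℕ) (i : Fin r) (c : cells (lam i)) : Finset Bool :=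
  if c.1.2 < J i then univ else {(T0 i c).2}

/-- barred class of one block -/
noncomputable def bcl (lam : Fin r → Fin n → ℕ) (T0 : (i : Fin r) → cells (lam i) → Fin n × Bool)
    (J : Fin r → ℕ) (a b : Fin n) (i : Fin r) : Finset (cells (lam i) → Fin n × Bool) :=
  univ.filter (fun t => inCl (lam i) (fun c => (T0 i c).1) (J i) a b (fun c => (t c).1) ∧
    ∀ c, (t c).2 ∈ Bs lam T0 J i c)

theorem mem_bcl (T0 : (i : Fin r) → cells (lam i) → Fin n × Bool)
    (J : Fin r → ℕ) (a b : Fin n) (i : Fin r) (t : cells (lam i) → Fin n × Bool) :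
    t ∈ bcl lam T0 J a b i ↔
      inCl (lam i) (fun c => (T0 i c).1) (J i) a b (fun c => (t c).1) ∧
      ∀ c, (t c).2 ∈ Bs lam T0 J i c := by
  unfold bcl
  rw [mem_filter]
  simp only [mem_univ, true_and]

theorem bcl_sum (T0 : (i : Fin r) → cells (lam i) → Fin n × Bool)
    (J : Fin r → ℕ) (a b : Fin n) (i : Fin r) :
    ∑ t ∈ bcl lam T0 J a b i, ∏ c : cells (lam i), W n r i c (t c).1 (t c).2 =
      (∏ c : cells (lam i), if c.1.2 < J i then 1 else W n r i c (T0 i c).1 (T0 i c).2) *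
      Blk (lam i) (fun c => (T0 i c).1) (J i) a b (fun z => X (Sum.inr (i, z)))
        (fun v => X (Sum.inl v)) := by
  unfold bcl
  rw [sum_bars (C := cells (lam i)) (inCl (lam i) (fun c => (T0 i c).1) (J i) a b) (Bs lam T0 J i)
      (fun c v z => W n r i c v z)]
  unfold Blk
  rw [Finset.mul_sum]
  refine sum_congr rfl fun V hV => ?_
  rw [← prod_mul_distrib]
  refine prod_congr rfl fun c _ => ?_
  unfold Bs
  by_cases h : c.1.2 < J i
  · simp [h, W, add_comm]
  · rw [mem_filter] at hV
    have : V c = (T0 i c).1 := by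
      rcases hV.2.2 c with h1 | h1
      · exact h1
      · exact absurd h1.1 h
    simp only [h, if_false, sum_singleton, mul_one]
    rw [this]

theorem act_Blk (i : Fin r) (mu : Fin n → ℕ) (hmu : IsPartition mu) (V0 : cells mu → Fin n)
    (hV : IsSSYT mu V0) (J : ℕ) (a b : Fin n) (hab : (b : ℕ) = a + 1)
    (H : ∀ c : cells mu, 0 < J → c.1.2 = J → V0 c = a →
      ∃ d : cells mu, d.1.2 = J ∧ V0 d = b) :
    act n r (Equiv.swap a b) (Blk mu V0 J a b (fun z => X (Sum.inr (i, z)))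
        (fun v => X (Sum.inl v))) = Blk mu V0 J a b (fun z => X (Sum.inr (i, z)))
        (fun v => X (Sum.inl v)) := by
  refine Eq.trans ?_ (Blk_symm (R := MvPolynomial (Fin n ⊕ Fin r × ℤ) ℤ) hmu hV a b hab H
    (fun z => X (Sum.inr (i, z))) (fun v => X (Sum.inl v)))
  unfold Blk
  rw [map_sum]
  refine sum_congr rfl fun V _ => ?_
  rw [map_prod]
  refine prod_congr rfl fun c _ => ?_
  split_ifs
  · rw [map_add, act_inl, act_inr]
  · rw [map_one]

theorem act_pows (a b : Fin n) (e : Fin n → ℕ) (he : e a = e b) :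
    act n r (Equiv.swap a b) (∏ v, X (Sum.inl v) ^ e v) = ∏ v, X (Sum.inl v) ^ e v := by
  rw [map_prod]
  simp_rw [map_pow, act_inl]
  rw [← Equiv.prod_comp (Equiv.swap a b)]
  refine prod_congr rfl fun v _ => ?_
  rw [Equiv.swap_apply_self]
  congr 1
  by_cases h1 : v = a
  · rw [h1, Equiv.swap_apply_left, he]
  · by_cases h2 : v = b
    · rw [h2, Equiv.swap_apply_right, he]
    · rw [Equiv.swap_apply_of_ne_of_ne h1 h2]

theorem J_iff {i j s : ℕ} (hj : j < M) : j < i * M + M - 1 - s ↔ ¬ tm M i j ≤ s := by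
  unfold tm
  generalize i * M = q
  omega

theorem fix_eq (hM : ∀ i j, lam i j ≤ M) (T0 : (i : Fin r) → cells (lam i) → Fin n × Bool) (s : ℕ) :
    (∏ i, ∏ c : cells (lam i), if c.1.2 < (i : ℕ) * M + M - 1 - s then 1 else
      W n r i c (T0 i c).1 (T0 i c).2) =
    (∏ v : Fin n, X (Sum.inl v) ^ cnt M lam T0 (s + 1) v) *
    (∏ i, ∏ c : cells (lam i), if tm M i c.1.2 < s + 1 ∧ (T0 i c).2 = true then
      X (Sum.inr (i, ysub (T0 i c).1 c)) else 1) := by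
  have h1 := cols_prod_count (M := M) lam T0 (s + 1)
    (fun v => if h : v < n then (X (Sum.inl ⟨v, h⟩) : MvPolynomial (Fin n ⊕ Fin r × ℤ) ℤ) else 1)
  rw [cols_prod lam hM] at h1
  simp only [Fin.is_lt, dif_pos, Fin.eta] at h1
  unfold cnt
  rw [← h1, ← prod_mul_distrib]
  refine prod_congr rfl fun i _ => ?_
  rw [← prod_mul_distrib]
  refine prod_congr rfl fun c _ => ?_
  have hc : c.1.2 < M := lt_of_lt_of_le (mem_cells'.mp c.2) (hM _ _)
  have hJ := J_iff (i := i) (s := s) hc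
  unfold W
  by_cases ht : tm M i c.1.2 ≤ s
  · rw [if_neg (by tauto)]
    cases h : (T0 i c).2 <;> simp [ht, Nat.lt_succ_iff]
  · rw [if_pos (by tauto), if_neg (by omega), if_neg (by omega), one_mul]

theorem class_zero (hlam : ∀ i, IsPartition (lam i)) (hM : ∀ i j, lam i j ≤ M)
    (T0 : (i : Fin r) → cells (lam i) → Fin n × Bool) (hT : IsBarredSkew lam T0)
    {s : ℕ} (a b : Fin n) (hab : (b : ℕ) = a + 1) (hF : Fst M lam T0 s a) :
    ∑ T ∈ Fintype.piFinset (bcl lam T0 (fun i => (i : ℕ) * M + M - 1 - s) a b),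
      Alt n r (xrho n r * wt lam T) = 0 := by
  obtain ⟨hcnt, hmem⟩ := hF.props hT
  rw [← Alt_sum, ← Finset.mul_sum]
  unfold wt
  rw [← Finset.prod_univ_sum (bcl lam T0 (fun i => (i : ℕ) * M + M - 1 - s) a b)
    (fun i t => ∏ c : cells (lam i), W n r i c (t c).1 (t c).2)]
  rw [prod_congr rfl fun i _ => bcl_sum T0 _ a b i, prod_mul_distrib, fix_eq hM]
  have hne : a ≠ b := fun h => by rw [h] at hab; omega
  apply Alt_zero _ a b hne
  unfold xrho
  rw [← mul_assoc, ← mul_assoc, ← prod_mul_distrib]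
  simp_rw [← pow_add]
  rw [map_mul, map_mul, act_pows, map_prod, map_prod]
  · congr 1
    · congr 1
      refine prod_congr rfl fun i _ => ?_
      rw [map_prod]
      refine prod_congr rfl fun c _ => ?_
      split_ifs
      · rw [act_inr]
      · rw [map_one]
    · refine prod_congr rfl fun i _ => ?_
      apply act_Blk i (lam i) (hlam i) _ (hT i) _ a b hab
      intro c hJ0 hcJ _
      unfold colAt at hmem
      split_ifs at hmem with hs
      · obtain ⟨d, hd1, hd2, hd3⟩ := mem_col1.mp hmem
        have hc : c.1.2 < M := lt_of_lt_of_le (mem_cells'.mp c.2) (hM _ _)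
        have hM0 : 0 < M := by omega
        have e := Nat.div_add_mod s M
        have hmod := Nat.mod_lt s hM0
        have hi : (i : ℕ) = s / M := by
          by_contra hne'
          rcases Nat.lt_or_gt_of_ne hne' with hlt | hlt
          · have : ((i : ℕ) + 1) * M ≤ s / M * M := Nat.mul_le_mul_right M hlt
            rw [mul_comm] at e
            rw [add_mul, one_mul] at this
            generalize (i : ℕ) * M = q1 at *
            generalize (s / M) * M = q2 at *
            omega
          · have : (s / M + 1) * M ≤ (i : ℕ) * M := Nat.mul_le_mul_right M hlt
            rw [mul_comm] at e
            rw [add_mul, one_mul] at this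
            generalize (i : ℕ) * M = q1 at *
            generalize (s / M) * M = q2 at *
            omega
        have hi' : i = ⟨s / M, hs⟩ := Fin.ext hi
        subst hi'
        refine ⟨d, ?_, Fin.ext (by omega)⟩
        rw [hd1]
        simp only
        rw [mul_comm] at e
        generalize (s / M) * M = q2 at *
        omega
      · simp at hmem
  · simp only [rhoPart, hab, hcnt]
    have := b.2
    omega

/-- canonical representative of a class -/
noncomputable def canon (M : ℕ) (lam : Fin r → Fin n → ℕ) (s k : ℕ)
    (T : (i : Fin r) → cells (lam i) → Fin n × Bool) (i : Fin r) (c : cells (lam i)) : ℕ × Bool :=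
  if tm M i c.1.2 ≤ s then ((T i c).1, (T i c).2) else
    (if ((T i c).1 : ℕ) = k + 1 then k else (T i c).1, false)

theorem bad_zero (hlam : ∀ i, IsPartition (lam i)) (hM : ∀ i j, lam i j ≤ M) :
    ∑ T ∈ univ.filter (fun T : (i : Fin r) → cells (lam i) → Fin n × Bool =>
      IsBarredSkew lam T ∧ ¬ IsYam (colWord lam T)), Alt n r (xrho n r * wt lam T) = 0 := by
  have hex : ∀ T : (i : Fin r) → cells (lam i) → Fin n × Bool, ∃ p : ℕ × ℕ,
      (IsBarredSkew lam T ∧ ¬ IsYam (colWord lam T)) → Fst M lam T p.1 p.2 := by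
    intro T
    by_cases h : IsBarredSkew lam T ∧ ¬ IsYam (colWord lam T)
    · obtain ⟨p, hp⟩ := Fst.exists (M := M) (mt (yam_iff hM h.1).mpr h.2)
      exact ⟨p, fun _ => hp⟩
    · exact ⟨(0, 0), fun h' => absurd h' h⟩
  choose p hp using hex
  refine sum_zero_of_fibers _ _ (fun T => (p T, canon M lam (p T).1 (p T).2 T)) ?_
  intro T0 hT0
  simp only [mem_filter, mem_univ, true_and] at hT0
  have hF := hp T0 hT0
  set s := (p T0).1 with hs
  set k := (p T0).2 with hk
  have hkn : k + 1 < n := by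
    have := (hF.props hT0.1).2
    unfold colAt at this
    split_ifs at this
    · obtain ⟨c, _, _, h⟩ := mem_col1.mp this
      rw [← h]; exact (T0 _ c).1.2
    · simp at this
  refine ⟨Fintype.piFinset (bcl lam T0 (fun i => (i : ℕ) * M + M - 1 - s) ⟨k, by omega⟩ ⟨k + 1, hkn⟩),
    fun T => ?_, class_zero hlam hM T0 hT0.1 _ _ rfl hF⟩
  rw [Fintype.mem_piFinset]
  simp only [mem_bcl, mem_filter, mem_univ, true_and, Prod.mk.injEq]
  simp only [Bs, inCl]
  have hJ : ∀ i : Fin r, ∀ c : cells (lam i), c.1.2 < (i : ℕ) * M + M - 1 - s ↔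
      ¬ tm M i c.1.2 ≤ s := fun i c =>
    J_iff (lt_of_lt_of_le (mem_cells'.mp c.2) (hM _ _))
  constructor
  · intro h
    have hTb : IsBarredSkew lam T := fun i => (h i).1.1
    have hfix : ∀ i, ∀ c : cells (lam i), tm M i c.1.2 ≤ s → T0 i c = T i c := by
      intro i c hc
      have hc' := mt (hJ i c).mp (not_not.mpr hc)
      have h1 := (h i).1.2 c
      have h2 := (h i).2 c
      simp only [hc', if_false, mem_singleton, false_and, or_false] at h1 h2
      exact (Prod.ext h1 h2).symm
    have hFT : Fst M lam T s k := hF.congr hM hfix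
    have hbad : IsBarredSkew lam T ∧ ¬ IsYam (colWord lam T) := by
      refine ⟨hTb, fun hy => ?_⟩
      have := (yam_iff hM hTb).mp hy (s + 1) hFT.1 k
      have := hFT.2.1
      omega
    obtain ⟨e1, e2⟩ := (hp T hbad).uniq hFT
    refine ⟨hbad, Prod.ext e1 e2, ?_⟩
    rw [e1, e2]
    funext i c
    unfold canon
    by_cases hc : tm M i c.1.2 ≤ s
    · rw [if_pos hc, if_pos hc, hfix i c hc]
    · rw [if_neg hc, if_neg hc]
      rcases (h i).1.2 c with h1 | ⟨_, h1, h2⟩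
      · rw [h1]
      · rcases h1 with h1 | h1 <;> rcases h2 with h2 | h2 <;> rw [h1, h2] <;> simp
  · rintro ⟨hbad, e1, e2⟩ i
    have e3 : (p T).1 = s := by rw [e1]
    have e4 : (p T).2 = k := by rw [e1]
    rw [e3, e4] at e2
    have e5 : ∀ c, canon M lam s k T i c = canon M lam s k T0 i c := fun c =>
      congrFun (congrFun e2 i) c
    refine ⟨⟨hbad.1 i, fun c => ?_⟩, fun c => ?_⟩
    · have e6 := e5 c
      unfold canon at e6
      by_cases hc : tm M i c.1.2 ≤ s
      · rw [if_pos hc, if_pos hc, Prod.mk.injEq] at e6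
        left; exact Fin.ext e6.1
      · rw [if_neg hc, if_neg hc, Prod.mk.injEq] at e6
        have e7 := e6.1
        simp only [hJ, Fin.ext_iff]
        split_ifs at e7 <;> simp_all
    · have e6 := e5 c
      unfold canon at e6
      by_cases hc : tm M i c.1.2 ≤ s
      · rw [if_pos hc, if_pos hc, Prod.mk.injEq] at e6
        have hc' := mt (hJ i c).mp (not_not.mpr hc)
        rw [if_neg hc']
        simp [e6.2]
      · rw [if_pos ((hJ i c).mpr hc)]; simp
end
/-- Corollary 3.3: `a_ρ(x) · s_λ̄(x|y)` equals the sum of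
`c_T(y) a_{ρ+ω(T)}(x)` over barred skew tableaux with Yamanouchi unbarred column word. -/
theorem alternant_times_factorial_schur_yam (n r : ℕ) (hn : 1 ≤ n) (hr : 1 ≤ r)
    (lam : Fin r → Fin n → ℕ) (hlam : ∀ i, IsPartition (lam i)) :
    avand n r (rhoPart n) * ∏ i, factSchur n r i (lam i)
      = ∑ T ∈ Finset.univ.filter
          (fun T : (i : Fin r) → cells (lam i) → Fin n × Bool =>
            IsBarredSkew lam T ∧ IsYam (colWord lam T)),
        rename Sum.inr (cT lam T) * avand n r (fun k => rhoPart n k + contentT lam T k) := by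

  have _ := hn
  have _ := hr
  have hM : ∀ i j, lam i j ≤ univ.sup (fun i => univ.sup (lam i)) := fun i j =>
    (Finset.le_sup (f := lam i) (mem_univ j)).trans
      (Finset.le_sup (f := fun i => univ.sup (lam i)) (mem_univ i))
  have hbad := bad_zero hlam hM
  rw [sum_congr rfl fun T _ => term_eq T]
  rw [avand_eq]
  have hs : ∀ s, act n r s (∏ i, factSchur n r i (lam i)) = ∏ i, factSchur n r i (lam i) := by
    intro s
    rw [map_prod]
    exact prod_congr rfl fun i _ => factSchur_symm i (lam i) (hlam i) s
  rw [← Alt_mul _ _ hs, ← full_sum, Finset.mul_sum, Alt_sum]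
  rw [← Finset.sum_filter_add_sum_filter_not _ (fun T => IsYam (colWord lam T)),
    Finset.filter_filter, Finset.filter_filter]
  unfold xrho at *
  rw [hbad, add_zero]
end

section
/- Let r ≥ 1 and let λ̄ = (λ^{(1)},…,λ^{(r)}) be a sequence of partitions in P_n. Then s_λ̄(x|y) = Σ c_T(y) · s_{ω(T)}(x), where the sum is over all barred skew tableaux T ∈ B_λ̄ whose unbarred column word is Yamanouchi. -/
open Finset MvPolynomial

attribute [local instance] Classical.propDecidable

namespace FS

/-- The ambient polynomial ring. -/
abbrev Rg (n r : ℕ) := MvPolynomial (Fin n ⊕ Fin r × ℤ) ℤ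

variable {n r : ℕ}

/-- Permutation of the x-variables. -/
noncomputable def act (σ : Equiv.Perm (Fin n)) : Rg n r →+* Rg n r :=
  (rename (Sum.map σ id) : Rg n r →ₐ[ℤ] Rg n r).toRingHom

noncomputable def xx (a : Fin n) : Rg n r := X (Sum.inl a)

lemma act_xx (σ : Equiv.Perm (Fin n)) (a : Fin n) : act σ (xx a : Rg n r) = xx (σ a) := by
  simp [act, xx]

lemma act_act (σ τ : Equiv.Perm (Fin n)) (f : Rg n r) : act σ (act τ f) = act (σ * τ) f := by
  simp only [act, AlgHom.toRingHom_eq_coe, RingHom.coe_coe, rename_rename]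
  congr 2
  funext a
  cases a <;> simp

lemma act_one (f : Rg n r) : act 1 f = f := by
  simp only [act, AlgHom.toRingHom_eq_coe, RingHom.coe_coe]
  have : (Sum.map (⇑(1 : Equiv.Perm (Fin n))) id : Fin n ⊕ Fin r × ℤ → _) = id := by
    funext a
    cases a <;> simp
  rw [this]
  simp

noncomputable def Alt (g : Rg n r) : Rg n r :=
  ∑ σ : Equiv.Perm (Fin n), ((Equiv.Perm.sign σ : ℤ) : Rg n r) * act σ g

lemma Alt_sum {ι : Type*} (s : Finset ι) (f : ι → Rg n r) :
    Alt (∑ i ∈ s, f i) = ∑ i ∈ s, Alt (f i) := by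
  simp only [Alt, map_sum, Finset.mul_sum]
  rw [Finset.sum_comm]

lemma Alt_mul_inv (c g : Rg n r) (hc : ∀ σ, act σ c = c) : Alt (c * g) = c * Alt g := by
  simp only [Alt, map_mul, hc, Finset.mul_sum]
  refine Finset.sum_congr rfl fun σ _ => ?_
  ring

lemma Alt_zero_of_swap (k k' : Fin n) (hk : k ≠ k') (g : Rg n r)
    (hg : act (Equiv.swap k k') g = g) : Alt g = 0 := by
  have h : Alt g = - Alt g := by
    conv_lhs => rw [Alt, ← Equiv.sum_comp (Equiv.mulRight (Equiv.swap k k'))]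
    rw [Alt, ← Finset.sum_neg_distrib]
    refine Finset.sum_congr rfl fun σ _ => ?_
    simp only [Equiv.coe_mulRight]
    rw [← act_act, hg]
    simp [Equiv.Perm.sign_mul, Equiv.Perm.sign_swap hk]
  exact self_eq_neg.mp h

noncomputable def xm (e : Fin n → ℕ) : Rg n r := ∏ i, xx i ^ e i

lemma xm_add (e f : Fin n → ℕ) : (xm (e + f) : Rg n r) = xm e * xm f := by
  simp [xm, pow_add, Finset.prod_mul_distrib]

lemma act_xm_swap (k k' : Fin n) (e : Fin n → ℕ) (h : e k = e k') :
    act (Equiv.swap k k') (xm e : Rg n r) = xm e := by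
  simp only [xm, map_prod, map_pow, act_xx]
  rw [← Equiv.prod_comp (Equiv.swap k k')]
  refine Finset.prod_congr rfl fun i _ => ?_
  rw [Equiv.swap_apply_self]
  congr 1
  rcases eq_or_ne i k with rfl | h1
  · simp [h]
  rcases eq_or_ne i k' with rfl | h2
  · simp [h]
  rw [Equiv.swap_apply_of_ne_of_ne h1 h2]

/-- x-invariance of the substituted y-variables. -/
def YInv (Y : ℤ → Rg n r) : Prop := ∀ σ z, act σ (Y z) = Y z

section cols
variable {α : Type} (lam : Fin n → ℕ) (v : α → Fin n) (a0 : α)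

def colOK (m : ℕ) (E : Fin n → α) : Prop :=
  (∀ i, ¬ m < lam i → E i = a0) ∧ ∀ i i', i < i' → m < lam i' → v (E i) < v (E i')

def colLe (m : ℕ) (E : Fin n → α) (D : Fin n → ℕ) : Prop :=
  ∀ i, m < lam i → (v (E i) : ℕ) ≤ D i

noncomputable def bd (m : ℕ) (E : Fin n → α) : Fin n → ℕ :=
  fun i => if m < lam i then (v (E i) : ℕ) else n

end cols

noncomputable def fac (Y : ℤ → Rg n r) (lam : Fin n → ℕ) (m : ℕ) (E : Fin n → Fin n) (i : Fin n) :
    Rg n r := if m < lam i then xx (E i) + Y (ysub (E i) (i, m)) else 1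

noncomputable def wt (Y : ℤ → Rg n r) (lam : Fin n → ℕ) (m : ℕ) (E : Fin n → Fin n) : Rg n r :=
  ∏ i, fac Y lam m E i

noncomputable def F (Y : ℤ → Rg n r) (lam : Fin n → ℕ) (a0 : Fin n) :
    ℕ → (Fin n → ℕ) → Rg n r
  | 0, _ => 1
  | m + 1, D => ∑ E ∈ univ.filter (fun E : Fin n → Fin n =>
      colOK lam id a0 m E ∧ colLe lam id m E D), wt Y lam m E * F Y lam a0 m (bd lam id m E)

def Good (k : ℕ) (D : Fin n → ℕ) : Prop :=
  ∀ i, D i = k → ∃ i' : Fin n, (i' : ℕ) = i + 1 ∧ D i' = k + 1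

lemma fac_inv {Y : ℤ → Rg n r} (hY : YInv Y) (lam : Fin n → ℕ) (m : ℕ) (E : Fin n → Fin n)
    (i : Fin n) (k k' : Fin n) (h1 : m < lam i → E i ≠ k) (h2 : m < lam i → E i ≠ k') :
    act (Equiv.swap k k') (fac Y lam m E i) = fac Y lam m E i := by
  unfold fac
  split_ifs with h
  · rw [map_add, act_xx, hY, Equiv.swap_apply_of_ne_of_ne (h1 h) (h2 h)]
  · simp

lemma wt_inv_pair {Y : ℤ → Rg n r} (hY : YInv Y) {lam : Fin n → ℕ} (hlam : Antitone lam)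
    (a0 : Fin n) (m : ℕ) (E : Fin n → Fin n) (hE : colOK lam id a0 m E)
    (k k' : Fin n) (hk : (k' : ℕ) = k + 1) (i i' : Fin n) (hi : m < lam i) (hi' : m < lam i')
    (hik : E i = k) (hik' : E i' = k') :
    act (Equiv.swap k k') (wt Y lam m E) = wt Y lam m E := by
  have hlt : ∀ a b : Fin n, a < b → m < lam b → (E a : ℕ) < E b := fun a b h1 h2 => hE.2 a b h1 h2
  have e1 : (E i : ℕ) = k := by rw [hik]
  have e2 : (E i' : ℕ) = k + 1 := by rw [hik', hk]
  have hii : i < i' := by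
    rcases lt_trichotomy i i' with h | h | h
    · exact h
    · subst h; omega
    · have := hlt _ _ h hi; omega
  have hs : (i' : ℕ) = i + 1 := by
    by_contra hne
    have hl : (i : ℕ) + 1 < i' := by have : (i : ℕ) < i' := hii; omega
    have hp : m < lam ⟨i + 1, by omega⟩ := lt_of_lt_of_le hi' (hlam (Fin.le_def.2 (by simp; omega)))
    have a1 := hlt i ⟨i + 1, by omega⟩ (by simp [Fin.lt_def]) hp
    have a2 := hlt ⟨i + 1, by omega⟩ i' (by simpa [Fin.lt_def] using hl) hi'
    omega
  have hinj : ∀ a b : Fin n, m < lam a → m < lam b → E a = E b → a = b := by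
    intro a b ha hb hab
    rcases lt_trichotomy a b with h | h | h
    · have := hlt _ _ h hb; rw [hab] at this; omega
    · exact h
    · have := hlt _ _ h ha; rw [hab] at this; omega
  have hf1 : fac Y lam m E i = xx k + Y ((k : ℤ) + 1 + m - i) := by
    simp [fac, hi, hik, ysub]
  have hf2 : fac Y lam m E i' = xx k' + Y ((k : ℤ) + 1 + m - i) := by
    simp only [fac, hi', hik', ysub, if_true]
    congr 2
    push_cast [hk, hs]
    ring
  unfold wt
  rw [map_prod, ← Equiv.prod_comp (Equiv.swap i i')]
  refine Finset.prod_congr rfl fun a _ => ?_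
  rcases eq_or_ne a i with rfl | h1
  · rw [Equiv.swap_apply_left, hf1, hf2, map_add, act_xx, hY, Equiv.swap_apply_right]
  rcases eq_or_ne a i' with rfl | h2
  · rw [Equiv.swap_apply_right, hf1, hf2, map_add, act_xx, hY, Equiv.swap_apply_left]
  rw [Equiv.swap_apply_of_ne_of_ne h1 h2]
  refine fac_inv hY lam m E a k k' (fun ha hh => h1 (hinj _ _ ha hi (by rw [hh, hik])))
    (fun ha hh => h2 (hinj _ _ ha hi' (by rw [hh, hik'])))

/-- The two parts of the invariance statement at stage `m`. -/
def InvA (Y : ℤ → Rg n r) (lam : Fin n → ℕ) (a0 k k' : Fin n) (m : ℕ) : Prop :=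
  ∀ D : Fin n → ℕ, (∀ i, ¬ m < lam i → n ≤ D i) → Good k D →
    act (Equiv.swap k k') (F Y lam a0 m D) = F Y lam a0 m D

def InvB (Y : ℤ → Rg n r) (lam : Fin n → ℕ) (a0 k k' : Fin n) (m : ℕ) : Prop :=
  ∀ (D : Fin n → ℕ) (i : Fin n), D i = k → (∀ i' < i, D i' < k) →
    ∃ S : Rg n r, act (Equiv.swap k k') S = S ∧
      F Y lam a0 m (Function.update D i (k + 1))
        = F Y lam a0 m D + (xx k' + Y ((k : ℤ) + 1 + m - i)) * S

lemma good_of_no {lam : Fin n → ℕ} (m : ℕ) (E : Fin n → Fin n) (k : Fin n)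
    (h : ∀ i, m < lam i → E i ≠ k) : Good k (bd lam id m E) := by
  intro i hi
  exfalso
  unfold bd at hi
  split_ifs at hi with hp
  · exact h i hp (Fin.ext hi)
  · have := k.2; omega

lemma bd_ge (lam : Fin n → ℕ) (m : ℕ) (E : Fin n → Fin n) (i : Fin n)
    (h : ¬ m < lam i) : n ≤ bd lam id m E i := by
  simp [bd, h]

lemma col_inj {lam : Fin n → ℕ} {a0 : Fin n} {m : ℕ} {E : Fin n → Fin n}
    (hE : colOK lam id a0 m E) (a b : Fin n) (ha : m < lam a) (hb : m < lam b)
    (hab : E a = E b) : a = b := by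
  rcases lt_trichotomy a b with h | h | h
  · have : E a < E b := hE.2 _ _ h hb
    rw [hab] at this
    exact absurd this (lt_irrefl _)
  · exact h
  · have : E b < E a := hE.2 _ _ h ha
    rw [hab] at this
    exact absurd this (lt_irrefl _)

lemma invB_aux {lam : Fin n → ℕ}
    (a0 k k' : Fin n) (hk : (k' : ℕ) = k + 1) (m : ℕ) (D : Fin n → ℕ) (i : Fin n)
    (hDi : D i = k) (hD : ∀ i' < i, D i' < k) (E : Fin n → Fin n)
    (h1 : colOK lam id a0 m E) (h2 : colLe lam id m E (Function.update D i (k + 1)))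
    (h3 : ¬ colLe lam id m E D) :
    m < lam i ∧ E i = k' ∧ ∀ a, m < lam a → E a ≠ k := by
  unfold colLe at h3
  push Not at h3
  obtain ⟨a, ha, hlt⟩ := h3
  have hai : a = i := by
    by_contra hne
    have := h2 a ha
    rw [Function.update_of_ne hne] at this
    omega
  subst hai
  have h4 := h2 a ha
  rw [Function.update_self] at h4
  simp only [id] at h4 hlt
  have h5 : (E a : ℕ) = k + 1 := by omega
  refine ⟨ha, Fin.ext (by omega), fun b hb hbk => ?_⟩
  have hbk' : (E b : ℕ) = k := by rw [hbk]
  rcases lt_trichotomy a b with h | h | h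
  · have : (E a : ℕ) < E b := h1.2 _ _ h hb
    omega
  · subst h; omega
  · have := h2 b hb
    rw [Function.update_of_ne (ne_of_lt h)] at this
    have := hD b h
    simp only [id] at *
    omega

lemma invB_succ {Y : ℤ → Rg n r} (hY : YInv Y) {lam : Fin n → ℕ} (hlam : Antitone lam)
    (a0 k k' : Fin n) (hk : (k' : ℕ) = k + 1) (m : ℕ) (hA : InvA Y lam a0 k k' m) :
    InvB Y lam a0 k k' (m + 1) := by
  intro D i hDi hD
  refine ⟨∑ E ∈ univ.filter (fun E : Fin n → Fin n =>
      (colOK lam id a0 m E ∧ colLe lam id m E (Function.update D i (k + 1))) ∧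
        ¬ colLe lam id m E D),
      (∏ a ∈ univ.erase i, fac Y lam m E a) * F Y lam a0 m (bd lam id m E), ?_, ?_⟩
  · rw [map_sum]
    refine Finset.sum_congr rfl fun E hE => ?_
    simp only [mem_filter, mem_univ, true_and] at hE
    obtain ⟨⟨h1, h2⟩, h3⟩ := hE
    obtain ⟨hp, hEi, hno⟩ := invB_aux a0 k k' hk m D i hDi hD E h1 h2 h3
    rw [map_mul, map_prod, hA _ (fun a ha => bd_ge lam m E a ha) (good_of_no m E k hno)]
    congr 1
    refine Finset.prod_congr rfl fun a ha => ?_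
    refine fac_inv hY lam m E a k k' (hno a) fun hpa hh => ?_
    exact (Finset.ne_of_mem_erase ha) (col_inj h1 a i hpa hp (by rw [hh, hEi]))
  · simp only [F]
    rw [← Finset.sum_filter_add_sum_filter_not _ (fun E => colLe lam id m E D)]
    congr 1
    · refine Finset.sum_congr ?_ fun _ _ => rfl
      ext E
      simp only [mem_filter, mem_univ, true_and]
      constructor
      · rintro ⟨⟨h1, _⟩, h2⟩
        exact ⟨h1, h2⟩
      · rintro ⟨h1, h2⟩
        refine ⟨⟨h1, fun a ha => ?_⟩, h2⟩
        have := h2 a ha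
        rcases eq_or_ne a i with rfl | h
        · rw [Function.update_self]; omega
        · rwa [Function.update_of_ne h]
    · rw [Finset.filter_filter, Finset.mul_sum]
      refine Finset.sum_congr rfl fun E hE => ?_
      simp only [mem_filter, mem_univ, true_and] at hE
      obtain ⟨⟨h1, h2⟩, h3⟩ := hE
      obtain ⟨hp, hEi, hno⟩ := invB_aux a0 k k' hk m D i hDi hD E h1 h2 h3
      have hfi : fac Y lam m E i = xx k' + Y ((k : ℤ) + 1 + ((m + 1 : ℕ) : ℤ) - i) := by
        simp only [fac, hp, hEi, ysub, if_true]
        congr 2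
        push_cast [hk]
        ring
      rw [wt, ← Finset.mul_prod_erase univ _ (mem_univ i), hfi]
      ring

/-- Exchange the letters `k` and `k'` in a column. -/
noncomputable def tw (lam : Fin n → ℕ) (k k' : Fin n) (m : ℕ) (E : Fin n → Fin n) :
    Fin n → Fin n :=
  fun i => if m < lam i then Equiv.swap k k' (E i) else E i

lemma tw_tw (lam : Fin n → ℕ) (k k' : Fin n) (m : ℕ) (E : Fin n → Fin n) :
    tw lam k k' m (tw lam k k' m E) = E := by
  funext i
  by_cases h : m < lam i <;> simp [tw, h]

def Has (lam : Fin n → ℕ) (k : Fin n) (m : ℕ) (E : Fin n → Fin n) : Prop :=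
  ∃ i, m < lam i ∧ E i = k

lemma has_tw (lam : Fin n → ℕ) (k k' a : Fin n) (m : ℕ) (E : Fin n → Fin n) :
    Has lam a m (tw lam k k' m E) ↔ Has lam (Equiv.swap k k' a) m E := by
  unfold Has
  refine exists_congr fun i => and_congr_right fun h => ?_
  simp only [tw, h, if_true]
  constructor
  · intro h; rw [← h]; simp
  · intro h; rw [h]; simp

lemma tw_ok {lam : Fin n → ℕ} (hlam : Antitone lam) (a0 k k' : Fin n) (hk : (k' : ℕ) = k + 1)
    (m : ℕ) (E : Fin n → Fin n) (hE : colOK lam id a0 m E)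
    (hno : ¬ (Has lam k m E ∧ Has lam k' m E)) : colOK lam id a0 m (tw lam k k' m E) := by
  refine ⟨fun i hi => ?_, fun i i' hii hi' => ?_⟩
  · simp [tw, hi, hE.1 i hi]
  · have hi : m < lam i := lt_of_lt_of_le hi' (hlam hii.le)
    have h1 : (E i : ℕ) < E i' := hE.2 i i' hii hi'
    have h2 : ¬ (E i = k ∧ E i' = k') := fun h => hno ⟨⟨i, hi, h.1⟩, ⟨i', hi', h.2⟩⟩
    simp only [tw, hi, hi', if_true, id]
    rw [Equiv.swap_apply_def, Equiv.swap_apply_def]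
    simp only [Fin.ext_iff, Fin.lt_def] at h2 ⊢
    split_ifs <;> omega

lemma tw_le {lam : Fin n → ℕ} (a0 k k' : Fin n) (hk : (k' : ℕ) = k + 1)
    (m : ℕ) (E : Fin n → Fin n) (hE : colOK lam id a0 m E)
    (hno : ¬ (Has lam k m E ∧ Has lam k' m E)) (D : Fin n → ℕ)
    (hD : ∀ i, ¬ m < lam i → n ≤ D i) (hG : Good k D) (hle : colLe lam id m E D) :
    colLe lam id m (tw lam k k' m E) D := by
  intro i hi
  have h1 := hle i hi
  simp only [tw, hi, if_true, id] at h1 ⊢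
  rw [Equiv.swap_apply_def]
  split_ifs with e1 e2
  · rcases Nat.lt_or_ge k (D i) with h | h
    · omega
    · exfalso
      have e1' : (E i : ℕ) = k := by rw [e1]
      obtain ⟨i', hi', hDi'⟩ := hG i (by omega)
      have hp : m < lam i' := by
        by_contra hp
        have := hD i' hp
        have := k'.2
        omega
      have h3 := hle i' hp
      have h4 : (E i : ℕ) < E i' := hE.2 i i' (by rw [Fin.lt_def]; omega) hp
      simp only [id] at h3
      exact hno ⟨⟨i, hi, e1⟩, ⟨i', hp, Fin.ext (by omega)⟩⟩
  · have e2' : (E i : ℕ) = k' := by rw [e2]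
    omega
  · exact h1

lemma wt_inv_none {Y : ℤ → Rg n r} (hY : YInv Y) {lam : Fin n → ℕ} (k k' : Fin n)
    (m : ℕ) (E : Fin n → Fin n) (h1 : ¬ Has lam k m E) (h2 : ¬ Has lam k' m E) :
    act (Equiv.swap k k') (wt Y lam m E) = wt Y lam m E := by
  unfold wt
  rw [map_prod]
  refine Finset.prod_congr rfl fun a _ => fac_inv hY lam m E a k k' ?_ ?_
  · exact fun h hh => h1 ⟨a, h, hh⟩
  · exact fun h hh => h2 ⟨a, h, hh⟩

lemma good_of_pair {lam : Fin n → ℕ} (hlam : Antitone lam) (a0 : Fin n) (m : ℕ)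
    (E : Fin n → Fin n) (hE : colOK lam id a0 m E) (k k' : Fin n) (hk : (k' : ℕ) = k + 1)
    (h' : Has lam k' m E) : Good k (bd lam id m E) := by
  intro i hi
  obtain ⟨i', hp', hi'⟩ := h'
  have hi'' : (E i' : ℕ) = k' := by rw [hi']
  unfold bd at hi
  split_ifs at hi with hp
  · simp only [id] at hi
    have hlt : ∀ a b : Fin n, a < b → m < lam b → (E a : ℕ) < E b :=
      fun a b h1 h2 => hE.2 a b h1 h2
    have hii : i < i' := by
      rcases lt_trichotomy i i' with h | h | h
      · exact h
      · subst h; omega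
      · have := hlt _ _ h hp; omega
    have hii' : (i : ℕ) < i' := hii
    have hs : (i' : ℕ) = i + 1 := by
      by_contra hne
      have hl : (i : ℕ) + 1 < i' := by omega
      have hq : m < lam ⟨i + 1, by omega⟩ :=
        lt_of_lt_of_le hp' (hlam (Fin.le_def.2 (by simp; omega)))
      have a1 := hlt i ⟨i + 1, by omega⟩ (by simp [Fin.lt_def]) hq
      have a2 := hlt ⟨i + 1, by omega⟩ i' (by simpa [Fin.lt_def] using hl) hp'
      omega
    exact ⟨i', hs, by simp [bd, hp', hi', hk]⟩
  · have := k.2; omega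

lemma free_inv {Y : ℤ → Rg n r} (hY : YInv Y) {lam : Fin n → ℕ} (hlam : Antitone lam)
    (a0 k k' : Fin n) (hk : (k' : ℕ) = k + 1) (m : ℕ) (hA : InvA Y lam a0 k k' m)
    (hB : InvB Y lam a0 k k' m) (E : Fin n → Fin n) (hE : colOK lam id a0 m E)
    (h1 : Has lam k m E) (h2 : ¬ Has lam k' m E) (f : (Fin n → Fin n) → Rg n r)
    (hf : ∀ E, f E = wt Y lam m E * F Y lam a0 m (bd lam id m E)) :
    act (Equiv.swap k k') (f E + f (tw lam k k' m E)) = f E + f (tw lam k k' m E) := by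
  obtain ⟨i, hp, hi⟩ := h1
  have hoff : ∀ a, a ≠ i → tw lam k k' m E a = E a := by
    intro a ha
    by_cases hpa : m < lam a
    · simp only [tw, hpa, if_true]
      refine Equiv.swap_apply_of_ne_of_ne (fun h => ha (col_inj hE a i hpa hp (by rw [h, hi])))
        fun h => h2 ⟨a, hpa, h⟩
    · simp [tw, hpa]
  have hon : tw lam k k' m E i = k' := by simp [tw, hp, hi]
  have hbd : bd lam id m (tw lam k k' m E) = Function.update (bd lam id m E) i (k + 1) := by
    funext a
    rcases eq_or_ne a i with rfl | ha
    · rw [Function.update_self]; simp [bd, hp, hon, hk]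
    · rw [Function.update_of_ne ha]; simp [bd, hoff a ha]
  obtain ⟨S, hS, hFS⟩ := hB (bd lam id m E) i (by simp [bd, hp, hi]) (by
    intro a ha
    have hpa : m < lam a := lt_of_lt_of_le hp (hlam ha.le)
    have : E a < E i := hE.2 a i ha hp
    rw [hi] at this
    simpa [bd, hpa] using this)
  have hP := hA (bd lam id m (tw lam k k' m E)) (fun a ha => bd_ge lam m _ a ha) (by
    refine good_of_no m _ k fun a hpa hh => ?_
    have : Has lam k m (tw lam k k' m E) := ⟨a, hpa, hh⟩
    rw [has_tw, Equiv.swap_apply_left] at this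
    exact h2 this)
  rw [hbd] at hP
  set P := F Y lam a0 m (Function.update (bd lam id m E) i (k + 1)) with hPdef
  set W := ∏ a ∈ univ.erase i, fac Y lam m E a with hWdef
  have hW : act (Equiv.swap k k') W = W := by
    rw [hWdef, map_prod]
    refine Finset.prod_congr rfl fun a ha => ?_
    have hai := Finset.ne_of_mem_erase ha
    exact fac_inv hY lam m E a k k'
      (fun hpa h => hai (col_inj hE a i hpa hp (by rw [h, hi]))) fun hpa h => h2 ⟨a, hpa, h⟩
  have hw1 : wt Y lam m E = (xx k + Y ((k : ℤ) + 1 + m - i)) * W := by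
    rw [wt, ← Finset.mul_prod_erase univ _ (mem_univ i)]
    congr 1
    simp [fac, hp, hi, ysub]
  have hw2 : wt Y lam m (tw lam k k' m E) = (xx k' + Y ((k : ℤ) + 2 + m - i)) * W := by
    rw [wt, ← Finset.mul_prod_erase univ _ (mem_univ i)]
    congr 1
    · simp only [fac, hp, hon, ysub, if_true]
      congr 2
      push_cast [hk]
      ring
    · refine Finset.prod_congr rfl fun a ha => ?_
      simp [fac, hoff a (Finset.ne_of_mem_erase ha)]
  have key : f E + f (tw lam k k' m E) =
      W * ((xx k + xx k' + Y ((k : ℤ) + 1 + m - i) + Y ((k : ℤ) + 2 + m - i)) * P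
        - (xx k + Y ((k : ℤ) + 1 + m - i)) * (xx k' + Y ((k : ℤ) + 1 + m - i)) * S) := by
    have : F Y lam a0 m (bd lam id m E) = P - (xx k' + Y ((k : ℤ) + 1 + m - i)) * S := by
      rw [hFS]; ring
    rw [hf, hf, hbd, hw1, hw2, this, ← hPdef]
    ring
  rw [key]
  simp only [map_mul, map_add, map_sub, hW, hP, hS, act_xx, hY _ _, Equiv.swap_apply_left,
    Equiv.swap_apply_right]
  ring

lemma invA_succ {Y : ℤ → Rg n r} (hY : YInv Y) {lam : Fin n → ℕ} (hlam : Antitone lam)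
    (a0 k k' : Fin n) (hk : (k' : ℕ) = k + 1) (m : ℕ) (hA : InvA Y lam a0 k k' m)
    (hB : InvB Y lam a0 k k' m) : InvA Y lam a0 k k' (m + 1) := by
  intro D hD hG
  have hD' : ∀ i, ¬ m < lam i → n ≤ D i := fun i hi => hD i (by omega)
  set f : (Fin n → Fin n) → Rg n r := fun E => wt Y lam m E * F Y lam a0 m (bd lam id m E)
    with hfdef
  set s := univ.filter (fun E : Fin n → Fin n =>
      colOK lam id a0 m E ∧ colLe lam id m E D) with hs
  have hF : F Y lam a0 (m + 1) D = ∑ E ∈ s, f E := rfl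
  have hms : ∀ E, E ∈ s ↔ colOK lam id a0 m E ∧ colLe lam id m E D := by
    intro E; simp [hs]
  clear_value s
  have hsplit : ∑ E ∈ s, f E
      = ∑ E ∈ s.filter (fun E => Has lam k m E ∧ ¬ Has lam k' m E),
          (f E + f (tw lam k k' m E))
        + ∑ E ∈ s.filter (fun E => (Has lam k m E ↔ Has lam k' m E)), f E := by
    rw [Finset.sum_add_distrib]
    have h2 : ∑ E ∈ s.filter (fun E => Has lam k m E ∧ ¬ Has lam k' m E), f (tw lam k k' m E)
        = ∑ E ∈ s.filter (fun E => ¬ Has lam k m E ∧ Has lam k' m E), f E := by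
      refine Finset.sum_nbij' (tw lam k k' m) (tw lam k k' m) ?_ ?_ ?_ ?_ ?_
      · intro E hE
        rw [mem_filter, hms] at hE ⊢
        rw [has_tw, has_tw, Equiv.swap_apply_left, Equiv.swap_apply_right]
        have hno : ¬ (Has lam k m E ∧ Has lam k' m E) := by tauto
        exact ⟨⟨tw_ok hlam a0 k k' hk m E hE.1.1 hno,
          tw_le a0 k k' hk m E hE.1.1 hno D hD' hG hE.1.2⟩, by tauto⟩
      · intro E hE
        rw [mem_filter, hms] at hE ⊢
        rw [has_tw, has_tw, Equiv.swap_apply_left, Equiv.swap_apply_right]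
        have hno : ¬ (Has lam k m E ∧ Has lam k' m E) := by tauto
        exact ⟨⟨tw_ok hlam a0 k k' hk m E hE.1.1 hno,
          tw_le a0 k k' hk m E hE.1.1 hno D hD' hG hE.1.2⟩, by tauto⟩
      · intro E _; exact tw_tw _ _ _ _ _
      · intro E _; exact tw_tw _ _ _ _ _
      · intro E _; rfl
    rw [h2, Finset.sum_filter, Finset.sum_filter, Finset.sum_filter, ← Finset.sum_add_distrib,
      ← Finset.sum_add_distrib]
    refine Finset.sum_congr rfl fun E _ => ?_
    by_cases a1 : Has lam k m E <;> by_cases a2 : Has lam k' m E <;> simp [a1, a2]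
  rw [hF, hsplit, map_add, map_sum, map_sum]
  congr 1
  · refine Finset.sum_congr rfl fun E hE => ?_
    rw [mem_filter, hms] at hE
    exact free_inv hY hlam a0 k k' hk m hA hB E hE.1.1 hE.2.1 hE.2.2 f (fun _ => rfl)
  · refine Finset.sum_congr rfl fun E hE => ?_
    rw [mem_filter, hms] at hE
    simp only [hfdef, map_mul]
    by_cases a2 : Has lam k' m E
    · have a1 := hE.2.2 a2
      have a2' := a2
      obtain ⟨i, hi, hi2⟩ := a1
      obtain ⟨i', hi', hi2'⟩ := a2'
      rw [wt_inv_pair hY hlam a0 m E hE.1.1 k k' hk i i' hi hi' hi2 hi2',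
        hA _ (fun a ha => bd_ge lam m E a ha) (good_of_pair hlam a0 m E hE.1.1 k k' hk a2)]
    · have a1 : ¬ Has lam k m E := fun h => a2 (hE.2.1 h)
      rw [wt_inv_none hY k k' m E a1 a2, hA _ (fun a ha => bd_ge lam m E a ha)
        (good_of_no m E k fun i h h' => a1 ⟨i, h, h'⟩)]

lemma F_inv {Y : ℤ → Rg n r} (hY : YInv Y) {lam : Fin n → ℕ} (hlam : Antitone lam)
    (a0 k k' : Fin n) (hk : (k' : ℕ) = k + 1) (m : ℕ) :
    InvA Y lam a0 k k' m ∧ InvB Y lam a0 k k' m := by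
  induction m with
  | zero =>
    refine ⟨fun D _ _ => by simp [F], fun D i _ _ => ⟨0, by simp, by simp [F]⟩⟩
  | succ m ih =>
    exact ⟨invA_succ hY hlam a0 k k' hk m ih.1 ih.2, invB_succ hY hlam a0 k k' hk m ih.1⟩

end FS

namespace FS
variable {n r : ℕ}

noncomputable def cc (Y : ℤ → Rg n r) (lam : Fin n → ℕ) (m : ℕ) (G : Fin n → Fin n × Bool) :
    Rg n r := ∏ i, if m < lam i ∧ (G i).2 = true then Y (ysub (G i).1 (i, m)) else 1

noncomputable def om (lam : Fin n → ℕ) (m : ℕ) (G : Fin n → Fin n × Bool) (k : Fin n) : ℕ :=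
  (univ.filter fun i => m < lam i ∧ G i = (k, false)).card

lemma xm_om (lam : Fin n → ℕ) (m : ℕ) (G : Fin n → Fin n × Bool) :
    (xm (om lam m G) : Rg n r) = ∏ i, if m < lam i ∧ (G i).2 = false then xx (G i).1 else 1 := by
  unfold xm om
  simp only [Finset.card_eq_sum_ones, Finset.sum_filter, ← Finset.prod_pow_eq_pow_sum]
  rw [Finset.prod_comm]
  refine Finset.prod_congr rfl fun i _ => ?_
  rw [Finset.prod_eq_single (G i).1]
  · have : G i = ((G i).1, false) ↔ (G i).2 = false := by
      constructor
      · intro h; rw [h]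
      · intro h; rw [← h]
    by_cases h : m < lam i ∧ (G i).2 = false
    · rw [if_pos h, if_pos ⟨h.1, this.2 h.2⟩, pow_one]
    · rw [if_neg h, if_neg (fun hh => h ⟨hh.1, this.1 hh.2⟩), pow_zero]
  · intro b _ hb
    rw [if_neg, pow_zero]
    rintro ⟨_, h⟩
    exact hb (by rw [h])
  · simp

lemma wt_expand (Y : ℤ → Rg n r) (lam : Fin n → ℕ) (m : ℕ) (E : Fin n → Fin n) :
    wt Y lam m E = ∑ b ∈ univ.filter (fun b : Fin n → Bool => ∀ i, ¬ m < lam i → b i = false),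
      cc Y lam m (fun i => (E i, b i)) * xm (om lam m (fun i => (E i, b i))) := by
  have h1 : ∀ i, fac Y lam m E i
      = ∑ b ∈ (if m < lam i then (univ : Finset Bool) else {false}),
        (if m < lam i ∧ b = true then Y (ysub (E i) (i, m)) else 1) *
          (if m < lam i ∧ b = false then xx (E i) else 1) := by
    intro i
    by_cases h : m < lam i <;> simp [fac, h, add_comm]
  unfold wt
  simp_rw [h1]
  rw [Finset.prod_univ_sum]
  refine Finset.sum_congr ?_ fun b _ => ?_
  · ext b
    simp only [Fintype.mem_piFinset, mem_filter, mem_univ, true_and]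
    refine forall_congr' fun i => ?_
    by_cases h : m < lam i <;> simp [h]
  · rw [xm_om, Finset.prod_mul_distrib]
    rfl

lemma sum_cols (Y : ℤ → Rg n r) (lam : Fin n → ℕ) (a0 : Fin n) (m : ℕ) (D : Fin n → ℕ)
    (h : (Fin n → ℕ) → Rg n r) :
    ∑ E ∈ univ.filter (fun E : Fin n → Fin n => colOK lam id a0 m E ∧ colLe lam id m E D),
        wt Y lam m E * h (bd lam id m E)
      = ∑ G ∈ univ.filter (fun G : Fin n → Fin n × Bool =>
          colOK lam Prod.fst (a0, false) m G ∧ colLe lam Prod.fst m G D),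
        cc Y lam m G * (xm (om lam m G) * h (bd lam Prod.fst m G)) := by
  simp_rw [wt_expand, Finset.sum_mul, Finset.sum_filter]
  rw [← Equiv.sum_comp (Equiv.arrowProdEquivProdArrow (Fin n) (fun _ => Fin n) (fun _ => Bool)).symm,
    Fintype.sum_prod_type]
  refine Finset.sum_congr rfl fun E _ => ?_
  by_cases hE : colOK lam id a0 m E ∧ colLe lam id m E D
  · rw [if_pos hE]
    refine Finset.sum_congr rfl fun b _ => ?_
    have : (colOK lam Prod.fst (a0, false) m (fun i => (E i, b i)) ∧
        colLe lam Prod.fst m (fun i => (E i, b i)) D) ↔ ∀ i, ¬ m < lam i → b i = false := by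
      constructor
      · rintro ⟨h1, h2⟩ i hi
        exact (Prod.ext_iff.1 (h1.1 i hi)).2
      · intro hb
        exact ⟨⟨fun i hi => Prod.ext (hE.1.1 i hi) (hb i hi), hE.1.2⟩, hE.2⟩
    have heq : (Equiv.arrowProdEquivProdArrow (Fin n) (fun _ => Fin n) (fun _ => Bool)).symm
        (E, b) = fun i => (E i, b i) := rfl
    rw [heq]
    by_cases hb : ∀ i, ¬ m < lam i → b i = false
    · rw [if_pos hb, if_pos (this.2 hb), mul_assoc]
      rfl
    · rw [if_neg hb, if_neg (fun hh => hb (this.1 hh))]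
  · rw [if_neg hE]
    symm
    refine Finset.sum_eq_zero fun b _ => ?_
    rw [if_neg]
    rintro ⟨h1, h2⟩
    exact hE ⟨⟨fun i hi => (Prod.ext_iff.1 (h1.1 i hi)).1, h1.2⟩, h2⟩

noncomputable def B (Y : ℤ → Rg n r) (lam : Fin n → ℕ) (a0 : Fin n) :
    ℕ → (Fin n → ℕ) → (Fin n → ℕ) → Rg n r
  | 0, ν, _ => Alt (xm (ν + rhoPart n))
  | m + 1, ν, D => ∑ G ∈ univ.filter (fun G : Fin n → Fin n × Bool =>
      colOK lam Prod.fst (a0, false) m G ∧ colLe lam Prod.fst m G D),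
      if Antitone (ν + om lam m G) then
        cc Y lam m G * B Y lam a0 m (ν + om lam m G) (bd lam Prod.fst m G) else 0

lemma antitone_adj (f : Fin n → ℕ) (h : ∀ k k' : Fin n, (k' : ℕ) = k + 1 → f k' ≤ f k) :
    Antitone f := by
  intro a b hab
  obtain ⟨b, hb⟩ := b
  induction b with
  | zero =>
    have : a = ⟨0, hb⟩ := Fin.ext (by have := Fin.le_def.1 hab; simpa using this)
    rw [this]
  | succ b ih =>
    rcases Nat.lt_or_ge (a : ℕ) (b + 1) with h1 | h1
    · exact (h ⟨b, by omega⟩ ⟨b + 1, hb⟩ rfl).trans (ih (by omega) (Fin.le_def.2 (by simp; omega)))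
    · have : a = ⟨b + 1, hb⟩ := Fin.ext (by have := Fin.le_def.1 hab; simp at this ⊢; omega)
      rw [this]

lemma cc_inv {Y : ℤ → Rg n r} (hY : YInv Y) (lam : Fin n → ℕ) (m : ℕ) (G : Fin n → Fin n × Bool)
    (σ : Equiv.Perm (Fin n)) : act σ (cc Y lam m G) = cc Y lam m G := by
  unfold cc
  rw [map_prod]
  refine Finset.prod_congr rfl fun i _ => ?_
  split_ifs
  · exact hY _ _
  · simp

theorem main_rec {Y : ℤ → Rg n r} (hY : YInv Y) {lam : Fin n → ℕ} (hlam : Antitone lam)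
    (a0 : Fin n) (m : ℕ) : ∀ (ν D : Fin n → ℕ), Antitone ν →
      Alt (xm (ν + rhoPart n) * F Y lam a0 m D) = B Y lam a0 m ν D := by
  induction m with
  | zero => intro ν D _; simp [F, B]
  | succ m ih =>
    intro ν D hν
    simp only [F, B]
    rw [sum_cols Y lam a0 m D (F Y lam a0 m), Finset.mul_sum, Alt_sum]
    refine Finset.sum_congr rfl fun G hG => ?_
    simp only [mem_filter, mem_univ, true_and] at hG
    have e : xm (ν + rhoPart n) * (cc Y lam m G * (xm (om lam m G) *
          F Y lam a0 m (bd lam Prod.fst m G)))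
        = cc Y lam m G * (xm (ν + om lam m G + rhoPart n) *
          F Y lam a0 m (bd lam Prod.fst m G)) := by
      rw [xm_add, xm_add, xm_add]; ring
    rw [e, Alt_mul_inv _ _ (cc_inv hY lam m G)]
    split_ifs with hA
    · rw [ih _ _ hA]
    · have : ∃ k k' : Fin n, (k' : ℕ) = k + 1 ∧ (ν + om lam m G) k < (ν + om lam m G) k' := by
        by_contra hcon
        push Not at hcon
        exact hA (antitone_adj _ hcon)
      obtain ⟨k, k', hk, hlt⟩ := this
      have hE : colOK lam id a0 m (fun i => (G i).1) :=
        ⟨fun i hi => (Prod.ext_iff.1 (hG.1.1 i hi)).1, hG.1.2⟩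
      have h1 : om lam m G k' ≤ 1 := by
        refine Finset.card_le_one.2 fun a ha b hb => ?_
        simp only [mem_filter, mem_univ, true_and] at ha hb
        exact col_inj hE a b ha.1 hb.1 (by simp [ha.2, hb.2])
      have h2 : ν k' ≤ ν k := hν (Fin.le_def.2 (by omega))
      simp only [Pi.add_apply] at hlt
      have h3 : 0 < om lam m G k' := by omega
      obtain ⟨i, hi⟩ := Finset.card_pos.1 h3
      simp only [mem_filter, mem_univ, true_and] at hi
      have hHas : Has lam k' m (fun i => (G i).1) := ⟨i, hi.1, by simp [hi.2]⟩
      have hgood := good_of_pair hlam a0 m _ hE k k' hk hHas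
      have hbd : bd lam Prod.fst m G = bd lam id m (fun i => (G i).1) := rfl
      rw [hbd, Alt_zero_of_swap k k' (fun h => by rw [h] at hk; omega), mul_zero]
      rw [map_mul, (F_inv hY hlam a0 k k' hk m).1 _ (fun a ha => bd_ge lam m _ a ha) hgood,
        act_xm_swap]
      simp only [Pi.add_apply, rhoPart]
      have := k'.2
      omega

lemma B_zero {lam : Fin n → ℕ} (hlam : Antitone lam) (a0 : Fin n) (m : ℕ) :
    B (fun _ => (0 : Rg n r)) lam a0 m (fun i => lam i - m)
      (fun i => if m < lam i then (i : ℕ) else n) = Alt (xm (lam + rhoPart n)) := by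
  induction m with
  | zero => simp only [B]; rfl
  | succ m ih =>
    simp only [B]
    set G0 : Fin n → Fin n × Bool := fun i => if m < lam i then (i, false) else (a0, false)
      with hG0
    have hom : ∀ k, om lam m G0 k = if m < lam k then 1 else 0 := by
      intro k
      unfold om
      by_cases h : m < lam k
      · rw [if_pos h, Finset.card_eq_one]
        refine ⟨k, ?_⟩
        ext i
        simp only [mem_filter, mem_univ, true_and, mem_singleton, hG0]
        constructor
        · rintro ⟨h1, h2⟩
          rw [if_pos h1] at h2
          exact (Prod.ext_iff.1 h2).1
        · rintro rfl
          exact ⟨h, by rw [if_pos h]⟩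
      · rw [if_neg h, Finset.card_eq_zero]
        ext i
        simp only [mem_filter, mem_univ, true_and, hG0, Finset.notMem_empty, iff_false]
        rintro ⟨h1, h2⟩
        rw [if_pos h1] at h2
        have h3 : i = k := (Prod.ext_iff.1 h2).1
        exact h (h3 ▸ h1)
    have hν : (fun i => lam i - (m + 1)) + om lam m G0 = fun i => lam i - m := by
      funext i
      simp only [Pi.add_apply, hom]
      split_ifs <;> omega
    have hant : Antitone (fun i => lam i - m) := fun a b hab => Nat.sub_le_sub_right (hlam hab) m
    rw [Finset.sum_eq_single G0]
    · rw [hν, if_pos hant]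
      have hcc : cc (fun _ => (0 : Rg n r)) lam m G0 = 1 := by
        unfold cc
        refine Finset.prod_eq_one fun i _ => ?_
        rw [if_neg]
        rintro ⟨h1, h2⟩
        simp [hG0, h1] at h2
      have hbd : bd lam Prod.fst m G0 = fun i => if m < lam i then (i : ℕ) else n := by
        funext i
        by_cases h : m < lam i <;> simp [bd, hG0, h]
      rw [hcc, one_mul, hbd, ih]
    · intro G hG hne
      simp only [mem_filter, mem_univ, true_and] at hG
      obtain ⟨hok, hle⟩ := hG
      by_cases hbar : ∃ i, m < lam i ∧ (G i).2 = true
      · obtain ⟨i, hi⟩ := hbar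
        have : cc (fun _ => (0 : Rg n r)) lam m G = 0 :=
          Finset.prod_eq_zero (mem_univ i) (by rw [if_pos hi])
        rw [this]; simp
      · rw [if_neg]
        intro hA
        push Not at hbar
        have hub : ∀ i, m < lam i → (G i).2 = false := fun i hi => by simpa using hbar i hi
        have hlt : ∀ a b : Fin n, a < b → m < lam b → ((G a).1 : ℕ) < (G b).1 :=
          fun a b h1 h2 => hok.2 a b h1 h2
        have hall : ∀ j (hj : j < n), m < lam ⟨j, hj⟩ → (G ⟨j, hj⟩).1 = ⟨j, hj⟩ := by
          intro j
          induction j using Nat.strong_induction_on with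
          | _ j ihj =>
          intro hj hp
          have hprev : ∀ a : Fin n, (a : ℕ) < j → ((G a).1 : ℕ) = a := by
            intro a ha
            have := ihj a ha a.2 (lt_of_lt_of_le hp (hlam (Fin.le_def.2 (by simpa using ha.le))))
            rw [Fin.eta] at this
            rw [this]
          have hge : j ≤ ((G ⟨j, hj⟩).1 : ℕ) := by
            rcases Nat.eq_zero_or_pos j with h0 | h0
            · omega
            · have h1 := hprev ⟨j - 1, by omega⟩ (by simp; omega)
              have h2 := hlt ⟨j - 1, by omega⟩ ⟨j, hj⟩ (by simp [Fin.lt_def]; omega) hp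
              simp only at h1
              omega
          by_contra hcon
          have hgt : j < ((G ⟨j, hj⟩).1 : ℕ) := by
            rcases Nat.lt_or_ge j ((G ⟨j, hj⟩).1 : ℕ) with h | h
            · exact h
            · exact absurd (Fin.ext (le_antisymm h hge)) hcon
          have hl := hle ⟨j, hj⟩ hp
          have hlam1 : lam ⟨j, hj⟩ ≤ m + 1 := by
            by_contra h
            have h' : m + 1 < lam ⟨j, hj⟩ := by omega
            simp only [h', if_true] at hl
            omega
          set w := (G ⟨j, hj⟩).1 with hw
          have hwn := w.2
          have hz : ∀ b : Fin n, j ≤ (b : ℕ) → lam b - (m + 1) = 0 := by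
            intro b hb
            have := hlam (show (⟨j, hj⟩ : Fin n) ≤ b from Fin.le_def.2 hb)
            omega
          have h1 : om lam m G ⟨w - 1, by omega⟩ = 0 := by
            unfold om
            rw [Finset.card_eq_zero]
            ext a
            simp only [mem_filter, mem_univ, true_and, Finset.notMem_empty, iff_false]
            rintro ⟨ha, hGa⟩
            have hGa' : ((G a).1 : ℕ) = w - 1 := by rw [hGa]
            rcases lt_trichotomy (a : ℕ) j with h | h | h
            · have := hprev a h
              omega
            · have : a = ⟨j, hj⟩ := Fin.ext h
              rw [this, ← hw] at hGa'
              omega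
            · have := hlt ⟨j, hj⟩ a (Fin.lt_def.2 h) ha
              rw [← hw] at this
              omega
          have h2 : 0 < om lam m G w := by
            unfold om
            refine Finset.card_pos.2 ⟨⟨j, hj⟩, ?_⟩
            simp only [mem_filter, mem_univ, true_and]
            exact ⟨hp, Prod.ext hw.symm (hub _ hp)⟩
          have h3 := hA (show (⟨w - 1, by omega⟩ : Fin n) ≤ w from Fin.le_def.2 (by simp))
          simp only [Pi.add_apply, h1, hz w (by omega)] at h3
          rw [hz _ (by simp; omega)] at h3
          omega
        apply hne
        funext i
        by_cases hi : m < lam i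
        · simp only [hG0, hi, if_true]
          exact Prod.ext (hall i i.2 hi) (hub i hi)
        · simp only [hG0, hi, if_false]
          exact hok.1 i hi
    · intro hG
      exfalso
      apply hG
      simp only [mem_filter, mem_univ, true_and]
      refine ⟨⟨fun i hi => by simp [hG0, hi], fun i i' h h' => ?_⟩, fun i hi => ?_⟩
      · have : m < lam i := lt_of_lt_of_le h' (hlam h.le)
        simp [hG0, h', this, h]
      · simp only [hG0, hi, if_true]
        split_ifs
        · rfl
        · exact i.2.le

end FS

namespace FS
variable {n r : ℕ}

section valid
variable {α : Type} (lam : Fin n → ℕ) (v : α → Fin n) (a0 : α)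

def Valid (m : ℕ) (D : Fin n → ℕ) (C : Fin m → Fin n → α) : Prop :=
  (∀ j : Fin m, colOK lam v a0 j (C j)) ∧
  (∀ j j' : Fin m, j < j' → ∀ i, (j' : ℕ) < lam i → v (C j i) ≤ v (C j' i)) ∧
  ∀ j : Fin m, colLe lam v j (C j) D

lemma valid_snoc (m : ℕ) (D : Fin n → ℕ) (hD : ∀ i, ¬ m + 1 < lam i → n ≤ D i)
    (C : Fin m → Fin n → α) (E : Fin n → α) :
    Valid lam v a0 (m + 1) D (Fin.snoc (α := fun _ => Fin n → α) C E) ↔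
      (colOK lam v a0 m E ∧ colLe lam v m E D) ∧ Valid lam v a0 m (bd lam v m E) C := by
  unfold Valid
  simp only [Fin.forall_fin_succ', Fin.snoc_castSucc, Fin.snoc_last, Fin.val_castSucc, Fin.val_last,
    Fin.castSucc_lt_castSucc_iff, lt_irrefl, false_imp_iff, and_true, Fin.castSucc_lt_last,
    true_imp_iff]
  constructor
  · rintro ⟨⟨h1, h2⟩, ⟨h3, h4⟩, h5, h6⟩
    refine ⟨⟨h2, h6⟩, h1, ?_, ?_⟩
    · intro j j' hj i hi
      exact (h3 j).1 j' hj i hi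
    · intro j i hi
      unfold bd
      split_ifs with hp
      · exact (h3 j).2 i hp
      · exact (v (C j i)).2.le
  · rintro ⟨⟨h2, h6⟩, h1, h3, h5⟩
    refine ⟨⟨h1, h2⟩, ⟨fun j => ⟨fun j' hj i hi => h3 j j' hj i hi, fun i hi => ?_⟩, ?_⟩, ?_, h6⟩
    · have := h5 j i (lt_trans j.2 hi)
      simpa [bd, hi] using this
    · intro j hj
      exact absurd hj (not_lt.2 (Fin.le_last _))
    · intro j i hi
      by_cases hp : m < lam i
      · have := h5 j i hi
        simp only [bd, hp, if_true] at this
        exact this.trans (h6 i hp)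
      · exact (v (C j i)).2.le.trans (hD i (by omega))

lemma sum_valid [Fintype α] (m : ℕ) (D : Fin n → ℕ) (hD : ∀ i, ¬ m + 1 < lam i → n ≤ D i)
    (f : (Fin (m + 1) → Fin n → α) → Rg n r) :
    ∑ C ∈ univ.filter (Valid lam v a0 (m + 1) D), f C
      = ∑ E ∈ univ.filter (fun E : Fin n → α => colOK lam v a0 m E ∧ colLe lam v m E D),
        ∑ C ∈ univ.filter (Valid lam v a0 m (bd lam v m E)),
          f (Fin.snoc (α := fun _ => Fin n → α) C E) := by
  simp only [Finset.sum_filter]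
  rw [← Equiv.sum_comp (Fin.snocEquiv (fun _ : Fin (m + 1) => Fin n → α)), Fintype.sum_prod_type]
  refine Finset.sum_congr rfl fun E _ => ?_
  have heq : ∀ C, (Fin.snocEquiv (fun _ : Fin (m + 1) => Fin n → α)) (E, C)
    = Fin.snoc (α := fun _ => Fin n → α) C E := fun C => rfl
  simp only [heq, valid_snoc lam v a0 m D hD]
  by_cases h : colOK lam v a0 m E ∧ colLe lam v m E D
  · simp only [h, true_and, if_true, and_self]
  · simp only [h, false_and, if_false, Finset.sum_const_zero]

end valid

lemma F_link (Y : ℤ → Rg n r) (lam : Fin n → ℕ) (a0 : Fin n) (m : ℕ) :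
    ∀ D : Fin n → ℕ, (∀ i, ¬ m < lam i → n ≤ D i) →
    F Y lam a0 m D = ∑ C ∈ univ.filter (Valid lam id a0 m D), ∏ j : Fin m, wt Y lam j (C j) := by
  induction m with
  | zero =>
    intro D hD
    have : univ.filter (Valid lam id a0 0 D) = univ := by
      ext C
      simp [Valid]
    rw [this]
    simp [F]
  | succ m ih =>
    intro D hD
    rw [sum_valid lam id a0 m D hD, F]
    refine Finset.sum_congr rfl fun E _ => ?_
    rw [ih _ (fun i hi => bd_ge lam m E i hi), Finset.mul_sum]
    refine Finset.sum_congr rfl fun C _ => ?_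
    rw [Fin.prod_univ_castSucc]
    simp only [Fin.snoc_castSucc, Fin.snoc_last, Fin.val_castSucc, Fin.val_last]
    ring

def YamFrom (ν : Fin n → ℕ) (w : List ℕ) : Prop :=
  ∀ t, Antitone (fun k : Fin n => ν k + (w.take t).count (k : ℕ))

lemma yam_append (ν : Fin n → ℕ) (w w' : List ℕ) :
    YamFrom ν (w ++ w') ↔ YamFrom ν w ∧ YamFrom (fun k => ν k + w.count (k : ℕ)) w' := by
  unfold YamFrom
  constructor
  · intro h
    constructor
    · intro t
      have := h (min t w.length)
      rwa [List.take_append_of_le_length (min_le_right _ _), ← List.take_eq_take_min] at this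
    · intro t
      have := h (w.length + t)
      rw [List.take_length_add_append] at this
      simpa [List.count_append, add_assoc] using this
  · rintro ⟨h1, h2⟩ t
    rcases le_total t w.length with h | h
    · rw [List.take_append_of_le_length h]
      exact h1 t
    · obtain ⟨s, rfl⟩ := Nat.exists_eq_add_of_le h
      rw [List.take_length_add_append]
      simpa [List.count_append, add_assoc] using h2 s

noncomputable def colw (lam : Fin n → ℕ) (m : ℕ) (G : Fin n → Fin n × Bool) : List ℕ :=
  (List.finRange n).filterMap fun i =>
    if m < lam i then (if (G i).2 = false then some ((G i).1 : ℕ) else none) else none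

lemma count_colw (lam : Fin n → ℕ) (m : ℕ) (G : Fin n → Fin n × Bool) (k : Fin n) :
    (colw lam m G).count (k : ℕ) = om lam m G k := by
  unfold om colw
  rw [Finset.card_eq_sum_ones, Finset.sum_filter, Fin.sum_univ_def]
  generalize List.finRange n = l
  induction l with
  | nil => simp
  | cons i l ih =>
    rw [List.map_cons, List.sum_cons, ← ih]
    have e : G i = (k, false) ↔ (G i).2 = false ∧ ((G i).1 : ℕ) = k := by
      rw [Prod.ext_iff, Fin.ext_iff]; tauto
    by_cases h1 : m < lam i
    · by_cases h2 : (G i).2 = false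
      · by_cases h3 : ((G i).1 : ℕ) = k
        · simp [h1, h2, e, h3, add_comm]
        · simp [h1, h2, e, h3]
      · simp [h1, h2, e]
    · simp [h1]

lemma colw_sorted (lam : Fin n → ℕ) (m : ℕ) (a0 : Fin n × Bool) (G : Fin n → Fin n × Bool)
    (hG : colOK lam Prod.fst a0 m G) : (colw lam m G).Pairwise (· < ·) := by
  unfold colw
  rw [List.pairwise_filterMap]
  refine (List.pairwise_lt_finRange n).imp ?_
  intro a b hab x hx y hy
  split_ifs at hx hy with h1 h2 h3 h4
  simp only [Option.some.injEq] at hx hy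
  subst hx; subst hy
  have := hG.2 a b hab (by assumption)
  exact this

lemma yam_colw (lam : Fin n → ℕ) (m : ℕ) (a0 : Fin n × Bool) (G : Fin n → Fin n × Bool)
    (hG : colOK lam Prod.fst a0 m G) (ν : Fin n → ℕ) (hν : Antitone ν) :
    YamFrom ν (colw lam m G) ↔ Antitone (ν + om lam m G) := by
  have hfun : (ν + om lam m G) = fun k : Fin n => ν k + (colw lam m G).count (k : ℕ) := by
    funext k; rw [Pi.add_apply, count_colw]
  rw [hfun]
  have hs := colw_sorted lam m a0 G hG
  generalize colw lam m G = w at hs ⊢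
  constructor
  · intro h
    have := h w.length
    rwa [List.take_length] at this
  · intro h t
    refine antitone_adj _ fun k k' hk => ?_
    have h1 : ν k' ≤ ν k := hν (Fin.le_def.2 (by omega))
    have h2 := h (show k ≤ k' from Fin.le_def.2 (by omega))
    simp only at h2
    rcases Nat.eq_zero_or_pos ((w.take t).count (k' : ℕ)) with h0 | h0
    · omega
    · have hmem : (k' : ℕ) ∈ w.take t := List.count_pos_iff.1 h0
      have hd : (w.drop t).count (k : ℕ) = 0 := by
        rw [List.count_eq_zero]
        intro hmem'
        rw [← List.take_append_drop t w, List.pairwise_append] at hs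
        have := hs.2.2 _ hmem _ hmem'
        omega
      have hc : w.count (k : ℕ) = (w.take t).count (k : ℕ) + (w.drop t).count (k : ℕ) := by
        rw [← List.count_append, List.take_append_drop]
      have hc' : (w.take t).count (k' : ℕ) ≤ w.count (k' : ℕ) :=
        (List.take_sublist t w).count_le _
      omega

noncomputable def cw (lam : Fin n → ℕ) (m : ℕ) (C : Fin m → Fin n → Fin n × Bool) : List ℕ :=
  (List.finRange m).reverse.flatMap fun j : Fin m => colw lam j (C j)

lemma cw_snoc (lam : Fin n → ℕ) (m : ℕ) (C : Fin m → Fin n → Fin n × Bool)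
    (E : Fin n → Fin n × Bool) :
    cw lam (m + 1) (Fin.snoc (α := fun _ => Fin n → Fin n × Bool) C E)
      = colw lam m E ++ cw lam m C := by
  unfold cw
  rw [List.finRange_succ_last]
  simp [List.flatMap_map, ← List.map_reverse]

lemma B_link (Y : ℤ → Rg n r) (lam : Fin n → ℕ) (a0 : Fin n) (m : ℕ) :
    ∀ ν D : Fin n → ℕ, Antitone ν → (∀ i, ¬ m < lam i → n ≤ D i) →
    B Y lam a0 m ν D = ∑ C ∈ univ.filter (Valid lam Prod.fst (a0, false) m D),
      if YamFrom ν (cw lam m C) then (∏ j : Fin m, cc Y lam j (C j)) *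
        Alt (xm (ν + (fun k => ∑ j : Fin m, om lam j (C j) k) + rhoPart n)) else 0 := by
  induction m with
  | zero =>
    intro ν D hν hD
    have : univ.filter (Valid lam Prod.fst (a0, false) 0 D) = univ := by
      ext C
      simp [Valid]
    rw [this]
    have h2 : YamFrom ν [] := by
      intro t
      simpa using hν
    have h3 : (ν + fun _ : Fin n => 0) = ν := by funext; simp
    simp [B, cw, h2, h3]
  | succ m ih =>
    intro ν D hν hD
    rw [sum_valid lam Prod.fst (a0, false) m D hD, B]
    refine Finset.sum_congr rfl fun E hE => ?_
    simp only [mem_filter, mem_univ, true_and] at hE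
    simp only [cw_snoc, yam_append, yam_colw lam m _ E hE.1 ν hν, count_colw]
    split_ifs with hA
    · rw [ih _ _ hA (fun i hi => by simp [bd, hi]), Finset.mul_sum]
      refine Finset.sum_congr rfl fun C _ => ?_
      have e1 : YamFrom (ν + om lam m E) (cw lam m C) ↔
        (Antitone (ν + om lam m E) ∧ YamFrom (fun k => ν k + om lam m E k) (cw lam m C)) :=
          ⟨fun h => ⟨hA, h⟩, fun h => h.2⟩
      by_cases hy : YamFrom (ν + om lam m E) (cw lam m C)
      · rw [if_pos hy, if_pos (e1.1 hy)]
        simp only [Fin.prod_univ_castSucc, Fin.sum_univ_castSucc, Fin.snoc_castSucc, Fin.snoc_last,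
          Fin.val_castSucc, Fin.val_last]
        have e2 : (ν + om lam m E + (fun k => ∑ j : Fin m, om lam j (C j) k) + rhoPart n)
          = (ν + (fun k => ∑ j : Fin m, om lam j (C j) k + om lam m E k) + rhoPart n) := by
          funext k
          simp only [Pi.add_apply]
          ring
        rw [e2]
        ring
      · rw [if_neg hy, if_neg (fun h => hy (e1.2 h)), mul_zero]
    · symm
      refine Finset.sum_eq_zero fun C _ => ?_
      rw [if_neg (fun h => hA h.1)]

end FS

namespace FS
variable {n r : ℕ}

lemma mem_cells (lam : Fin n → ℕ) (i : Fin n) (j : ℕ) : (i, j) ∈ cells lam ↔ j < lam i := by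
  unfold cells
  simp only [mem_filter, mem_product, mem_univ, true_and, mem_range, and_iff_right_iff_imp]
  intro h
  exact lt_of_lt_of_le h (Finset.le_sup (f := lam) (mem_univ i))

lemma prod_cells {M : Type*} [CommMonoid M] (lam : Fin n → ℕ) (h : Fin n × ℕ → M) :
    ∏ c : cells lam, h c = ∏ j : Fin (univ.sup lam), ∏ i, if (j : ℕ) < lam i then h (i, j) else 1 := by
  rw [Finset.prod_coe_sort (cells lam) h, cells, Finset.prod_filter, Finset.prod_product_right,
    Finset.prod_range]

lemma sum_cells {M : Type*} [AddCommMonoid M] (lam : Fin n → ℕ) (h : Fin n × ℕ → M) :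
    ∑ c : cells lam, h c = ∑ j : Fin (univ.sup lam), ∑ i, if (j : ℕ) < lam i then h (i, j) else 0 := by
  rw [Finset.sum_coe_sort (cells lam) h, cells, Finset.sum_filter, Finset.sum_product_right,
    Finset.sum_range]

section ext
variable {α : Type} (lam : Fin n → ℕ) (v : α → Fin n) (a0 : α)

noncomputable def ext (T : cells lam → α) (j : ℕ) (i : Fin n) : α :=
  if h : (i, j) ∈ cells lam then T ⟨(i, j), h⟩ else a0

lemma ext_apply (T : cells lam → α) (c : cells lam) :
    ext lam a0 T (c : Fin n × ℕ).2 (c : Fin n × ℕ).1 = T c := by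
  unfold ext
  rw [dif_pos c.2]

noncomputable def extF (T : cells lam → α) : Fin (univ.sup lam) → Fin n → α :=
  fun j => ext lam a0 T j

lemma cells_lt (c : cells lam) : (c : Fin n × ℕ).2 < univ.sup lam := by
  have := c.2
  unfold cells at this
  simp only [mem_filter, mem_product, mem_univ, true_and, mem_range] at this
  exact this.1

lemma valid_ext (T : cells lam → α) (hlam : Antitone lam) :
    IsSSYT lam (fun c => v (T c)) ↔ Valid lam v a0 (univ.sup lam) (fun _ => n) (extF lam a0 T) := by
  constructor
  · rintro ⟨h1, h2⟩
    refine ⟨fun j => ⟨fun i hi => ?_, fun i i' hii hi' => ?_⟩, fun j j' hj i hi => ?_, fun j i _ =>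
      (v _).2.le⟩
    · simp [extF, ext, mem_cells, hi]
    · have hi : (j : ℕ) < lam i := lt_of_lt_of_le hi' (hlam hii.le)
      simp only [extF, ext, mem_cells, hi, hi', dif_pos]
      exact h2 _ _ rfl hii
    · have hi' : (j : ℕ) < lam i := lt_trans hj hi
      simp only [extF, ext, mem_cells, hi, hi', dif_pos]
      exact h1 _ _ rfl hj.le
  · rintro ⟨h1, h2, _⟩
    refine ⟨fun c d hcd hle => ?_, fun c d hcd hlt => ?_⟩
    · rcases hle.lt_or_eq with h | h
      · have := h2 ⟨_, cells_lt lam c⟩ ⟨_, cells_lt lam d⟩ h (d : Fin n × ℕ).1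
          ((mem_cells lam _ _).1 d.2)
        simp only [extF] at this
        rw [ext_apply, ← hcd, ext_apply] at this
        exact this
      · have : c = d := Subtype.ext (Prod.ext hcd h)
        rw [this]
    · have := (h1 ⟨_, cells_lt lam d⟩).2 (c : Fin n × ℕ).1 (d : Fin n × ℕ).1 hlt
        ((mem_cells lam _ _).1 d.2)
      simp only [extF] at this
      rw [ext_apply, ← hcd, ext_apply] at this
      exact this

lemma sum_tab [Fintype α] (hlam : Antitone lam) (f : (cells lam → α) → Rg n r)
    (g : (Fin (univ.sup lam) → Fin n → α) → Rg n r) (hfg : ∀ T, f T = g (extF lam a0 T)) :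
    ∑ T ∈ univ.filter (fun T : cells lam → α => IsSSYT lam (fun c => v (T c))), f T
      = ∑ C ∈ univ.filter (Valid lam v a0 (univ.sup lam) (fun _ => n)), g C := by
  have hinv : ∀ C, Valid lam v a0 (univ.sup lam) (fun _ => n) C →
      extF lam a0 (fun c => C ⟨(c : Fin n × ℕ).2, cells_lt lam c⟩ (c : Fin n × ℕ).1) = C := by
    intro C hC
    funext j i
    unfold extF ext
    split_ifs with h
    · rfl
    · rw [mem_cells] at h
      exact ((hC.1 j).1 i h).symm
  refine Finset.sum_nbij' (extF lam a0)
    (fun C c => C ⟨(c : Fin n × ℕ).2, cells_lt lam c⟩ (c : Fin n × ℕ).1) ?_ ?_ ?_ ?_ ?_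
  · intro T hT
    simp only [mem_filter, mem_univ, true_and] at hT ⊢
    exact (valid_ext lam v a0 T hlam).1 hT
  · intro C hC
    simp only [mem_filter, mem_univ, true_and] at hC ⊢
    rw [valid_ext lam v a0 _ hlam, hinv C hC]
    exact hC
  · intro T _
    funext c
    exact ext_apply lam a0 T c
  · intro C hC
    simp only [mem_filter, mem_univ, true_and] at hC
    exact hinv C hC
  · intro T _
    exact hfg T

end ext

noncomputable def tabSum (Y : ℤ → Rg n r) (lam : Fin n → ℕ) : Rg n r :=
  ∑ T ∈ univ.filter (IsSSYT lam), ∏ c : cells lam, (xx (T c) + Y (ysub (T c) (c : Fin n × ℕ)))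

lemma tabSum_eq (Y : ℤ → Rg n r) {lam : Fin n → ℕ} (hlam : Antitone lam) (a0 : Fin n) :
    tabSum Y lam = F Y lam a0 (univ.sup lam) (fun _ => n) := by
  rw [F_link Y lam a0 _ _ (fun _ _ => le_rfl)]
  refine sum_tab lam id a0 hlam _ _ fun T => ?_
  have := prod_cells lam (fun c : Fin n × ℕ =>
    xx (r := r) (ext lam a0 T c.2 c.1) + Y (ysub (ext lam a0 T c.2 c.1) c))
  simp only [ext_apply] at this
  rw [this]
  rfl

lemma colWord1_eq (lam : Fin n → ℕ) (a0 : Fin n × Bool) (T : cells lam → Fin n × Bool) :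
    colWord1 lam T = cw lam (univ.sup lam) (extF lam a0 T) := by
  unfold colWord1 cw
  rw [← List.map_coe_finRange_eq_range, ← List.map_reverse, List.flatMap_map]
  congr 1
  funext j
  unfold colw
  congr 1
  funext i
  by_cases h : (j : ℕ) < lam i
  · have h' := (mem_cells lam i j).2 h
    rw [dif_pos h', if_pos h]
    simp only [extF, ext, h', dif_pos]
  · have h' := fun hh => h ((mem_cells lam i j).1 hh)
    rw [dif_neg h', if_neg h]

noncomputable def cY (Y : ℤ → Rg n r) (lam : Fin n → ℕ) (T : cells lam → Fin n × Bool) : Rg n r :=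
  ∏ c ∈ univ.filter (fun c : cells lam => (T c).2 = true), Y (ysub (T c).1 (c : Fin n × ℕ))

lemma content1_eq (lam : Fin n → ℕ) (a0 : Fin n) (T : cells lam → Fin n × Bool) :
    content1 lam T = fun k => ∑ j : Fin (univ.sup lam), om lam j (extF lam (a0, false) T j) k := by
  funext k
  unfold content1 om
  simp only [Finset.card_eq_sum_ones]
  rw [Finset.sum_filter]
  have := sum_cells lam (fun c : Fin n × ℕ => if (ext lam (a0, false) T c.2 c.1) = (k, false) then
    1 else 0)
  simp only [ext_apply] at this
  rw [this]
  refine Finset.sum_congr rfl fun j _ => ?_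
  rw [Finset.sum_filter]
  refine Finset.sum_congr rfl fun i _ => ?_
  simp only [extF]
  by_cases hh1 : (j : ℕ) < lam i <;>
    by_cases hh2 : ext lam (a0, false) T j i = (k, false) <;> simp [hh1, hh2]

lemma count_cw (lam : Fin n → ℕ) (m : ℕ) (C : Fin m → Fin n → Fin n × Bool) (k : Fin n) :
    (cw lam m C).count (k : ℕ) = ∑ j : Fin m, om lam j (C j) k := by
  unfold cw
  rw [List.count_flatMap, List.map_reverse, List.sum_reverse, Fin.sum_univ_def]
  congr 1
  refine List.map_congr_left fun j _ => ?_
  exact count_colw lam j (C j) k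

lemma content1_count (lam : Fin n → ℕ) (T : cells lam → Fin n × Bool) (k : Fin n) :
    content1 lam T k = (colWord1 lam T).count (k : ℕ) := by
  rw [content1_eq lam k T, colWord1_eq lam (k, false) T, count_cw]

lemma anti_content (lam : Fin n → ℕ) (T : cells lam → Fin n × Bool) (ν : Fin n → ℕ)
    (h : YamFrom ν (colWord1 lam T)) : Antitone (ν + content1 lam T) := by
  have := h (colWord1 lam T).length
  rw [List.take_length] at this
  intro a b hab
  have := this hab
  simp only [← content1_count] at this
  exact this

lemma B_eq (Y : ℤ → Rg n r) {lam : Fin n → ℕ} (hlam : Antitone lam) (a0 : Fin n)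
    (ν : Fin n → ℕ) (hν : Antitone ν) :
    B Y lam a0 (univ.sup lam) ν (fun _ => n)
      = ∑ T ∈ univ.filter (IsBarred lam), if YamFrom ν (colWord1 lam T) then
          cY Y lam T * Alt (xm (ν + content1 lam T + rhoPart n)) else 0 := by
  rw [B_link Y lam a0 _ _ _ hν (fun _ _ => le_rfl)]
  symm
  refine sum_tab lam Prod.fst (a0, false) hlam _ _ fun T => ?_
  rw [← colWord1_eq]
  have h1 : cY Y lam T = ∏ j : Fin (univ.sup lam), cc Y lam j (extF lam (a0, false) T j) := by
    unfold cY
    rw [Finset.prod_filter]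
    have := prod_cells lam (fun c : Fin n × ℕ => if (ext lam (a0, false) T c.2 c.1).2 = true then
      Y (ysub (ext lam (a0, false) T c.2 c.1).1 c) else 1)
    simp only [ext_apply] at this
    rw [this]
    refine Finset.prod_congr rfl fun j _ => Finset.prod_congr rfl fun i _ => ?_
    simp only [extF]
    by_cases hh1 : (j : ℕ) < lam i <;>
      by_cases hh2 : (ext lam (a0, false) T j i).2 = true <;> simp [hh1, hh2]
  rw [h1, content1_eq lam a0 T]

lemma Alt_rho_ne : Alt (xm (rhoPart n) : Rg n r) ≠ 0 := by
  have h1 : Alt (xm (rhoPart n) : Rg n r)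
      = ((Matrix.vandermonde (fun i : Fin n => (xx i : Rg n r))).submatrix id Fin.revPerm).det := by
    rw [Matrix.det_apply']
    unfold Alt xm
    refine Finset.sum_congr rfl fun σ _ => ?_
    congr 1
    rw [map_prod]
    refine Finset.prod_congr rfl fun i _ => ?_
    simp only [map_pow, act_xx, Matrix.submatrix_apply, id, Matrix.vandermonde_apply, rhoPart,
      Fin.revPerm_apply, Fin.val_rev]
    congr 1
    omega
  rw [h1, Matrix.det_permute']
  refine mul_ne_zero ?_ ?_
  · rcases Int.units_eq_one_or (Equiv.Perm.sign (Fin.revPerm : Equiv.Perm (Fin n))) with h | h <;>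
      rw [h] <;> simp
  · rw [Matrix.det_vandermonde_ne_zero_iff]
    intro a b hab
    simpa [xx] using hab

lemma tabSum_inv {Y : ℤ → Rg n r} (hY : YInv Y) {lam : Fin n → ℕ} (hlam : Antitone lam)
    (hn : 1 ≤ n) (σ : Equiv.Perm (Fin n)) : act σ (tabSum Y lam) = tabSum Y lam := by
  obtain ⟨n, rfl⟩ : ∃ n', n = n' + 1 := ⟨n - 1, by omega⟩
  have hσ : σ ∈ (⊤ : Submonoid (Equiv.Perm (Fin (n + 1)))) := trivial
  rw [← Equiv.Perm.mclosure_swap_castSucc_succ] at hσ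
  induction hσ using Submonoid.closure_induction with
  | mem x hx =>
    obtain ⟨i, rfl⟩ := hx
    rw [tabSum_eq Y hlam 0]
    have := (F_inv hY hlam 0 i.castSucc i.succ (by simp) (univ.sup lam)).1 (fun _ => n + 1)
      (fun _ _ => le_rfl) (by
        intro a ha
        change n + 1 = _ at ha
        have := i.castSucc.2
        omega)
    convert this
  | one => exact act_one _
  | mul a b _ _ ha hb => rw [← act_act, hb, ha]

lemma schur_eq (lam : Fin n → ℕ) : schur n r lam = tabSum (fun _ => 0) lam := by
  simp [schur, tabSum, xx]

lemma zinv : YInv (fun _ => (0 : Rg n r)) := fun _ _ => map_zero _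

lemma bialt {lam : Fin n → ℕ} (hlam : Antitone lam) (hn : 1 ≤ n) :
    Alt (xm (rhoPart n)) * schur n r lam = Alt (xm (lam + rhoPart n)) := by
  have a0 : Fin n := ⟨0, hn⟩
  rw [mul_comm, ← Alt_mul_inv _ _ (by rw [schur_eq]; exact tabSum_inv zinv hlam hn), schur_eq,
    tabSum_eq _ hlam a0, mul_comm]
  have h1 := main_rec (zinv (r := r)) hlam a0 (univ.sup lam) 0 (fun _ => n) (fun _ _ _ => le_rfl)
  rw [zero_add] at h1
  rw [h1, ← B_zero hlam a0 (univ.sup lam)]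
  have hle : ∀ i, lam i ≤ univ.sup lam := fun i => Finset.le_sup (f := lam) (mem_univ i)
  congr 1
  · funext i
    have := hle i
    simp only [Pi.zero_apply]
    omega
  · funext i
    rw [if_neg (not_lt.2 (hle i))]

theorem single {Y : ℤ → Rg n r} (hY : YInv Y) {lam : Fin n → ℕ} (hlam : Antitone lam)
    (hn : 1 ≤ n) (ν : Fin n → ℕ) (hν : Antitone ν) :
    schur n r ν * tabSum Y lam = ∑ T ∈ univ.filter (IsBarred lam),
      if YamFrom ν (colWord1 lam T) then cY Y lam T * schur n r (ν + content1 lam T) else 0 := by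
  have a0 : Fin n := ⟨0, hn⟩
  refine mul_left_cancel₀ (Alt_rho_ne (n := n) (r := r)) ?_
  rw [← mul_assoc, bialt hν hn, mul_comm, ← Alt_mul_inv _ _ (tabSum_inv hY hlam hn), mul_comm,
    tabSum_eq Y hlam a0, main_rec hY hlam a0 _ _ _ hν, B_eq Y hlam a0 ν hν, Finset.mul_sum]
  refine Finset.sum_congr rfl fun T _ => ?_
  split_ifs with h
  · have hA : Antitone (ν + content1 lam T) := anti_content lam T ν h
    rw [← bialt hA hn]
    ring
  · simp

end FS

namespace FS
variable {n r : ℕ}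

noncomputable def yv (i : Fin r) : ℤ → Rg n r := fun z => X (Sum.inr (i, z))

lemma yv_inv (i : Fin r) : YInv (yv i : ℤ → Rg n r) := by
  intro σ z
  simp [act, yv]

lemma factSchur_eq (i : Fin r) (lam : Fin n → ℕ) : factSchur n r i lam = tabSum (yv i) lam := rfl

lemma rename_cT1 (i : Fin r) (lam : Fin n → ℕ) (T : cells lam → Fin n × Bool) :
    rename Sum.inr (cT1 r i lam T) = (cY (yv i) lam T : Rg n r) := by
  unfold cT1 cY yv
  rw [map_prod]
  simp only [rename_X]

theorem multi (hn : 1 ≤ n) (r' : ℕ) : ∀ (ι : Fin r' → Fin r) (lam : Fin r' → Fin n → ℕ)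
    (_ : ∀ i, Antitone (lam i)) (ν : Fin n → ℕ) (_ : Antitone ν),
    schur n r ν * ∏ i, factSchur n r (ι i) (lam i)
      = ∑ T : (i : Fin r') → cells (lam i) → Fin n × Bool,
        if (∀ i, IsBarred (lam i) (T i)) ∧
            YamFrom ν ((List.finRange r').flatMap fun i => colWord1 (lam i) (T i)) then
          (∏ i, cY (yv (ι i)) (lam i) (T i)) *
            schur n r (ν + fun k => ∑ i, content1 (lam i) (T i) k) else 0 := by
  induction r' with
  | zero =>
    intro ι lam hlam ν hν
    have h0 : YamFrom ν [] := by
      intro t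
      simpa using hν
    have h1 : (ν + fun _ => 0) = ν := by funext; simp
    simp [h0, h1]
  | succ m ih =>
    intro ι lam hlam ν hν
    rw [Fin.prod_univ_succ, ← mul_assoc, factSchur_eq, single (yv_inv (ι 0)) (hlam 0) hn ν hν,
      Finset.sum_mul, Finset.sum_filter,
      ← (Fin.consEquiv (fun i => cells (lam i) → Fin n × Bool)).sum_comp, Fintype.sum_prod_type]
    refine Finset.sum_congr rfl fun T _ => ?_
    by_cases hB : IsBarred (lam 0) T
    swap
    · rw [if_neg hB]
      symm
      refine Finset.sum_eq_zero fun T' _ => ?_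
      rw [if_neg]
      rintro ⟨h, _⟩
      exact hB (h 0)
    rw [if_pos hB]
    by_cases hYam : YamFrom ν (colWord1 (lam 0) T)
    swap
    · rw [if_neg hYam, zero_mul]
      symm
      refine Finset.sum_eq_zero fun T' _ => ?_
      rw [if_neg]
      rintro ⟨_, h⟩
      rw [List.finRange_succ, List.flatMap_cons, yam_append] at h
      exact hYam h.1
    rw [if_pos hYam, mul_assoc, ih (fun i => ι i.succ) (fun i => lam i.succ) (fun i => hlam i.succ) _
      (anti_content _ _ _ hYam), Finset.mul_sum]
    refine Finset.sum_congr rfl fun T' _ => ?_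
    have hc : (ν + content1 (lam 0) T) = fun k : Fin n => ν k + (colWord1 (lam 0) T).count (k : ℕ) := by
      funext k
      rw [Pi.add_apply, content1_count]
    have hS0 : (Fin.consEquiv (fun i : Fin (m + 1) => cells (lam i) → Fin n × Bool)) (T, T') 0 = T :=
      rfl
    have hSs : ∀ i : Fin m, (Fin.consEquiv (fun i : Fin (m + 1) => cells (lam i) → Fin n × Bool))
        (T, T') i.succ = T' i := fun i => rfl
    generalize (Fin.consEquiv (fun i : Fin (m + 1) => cells (lam i) → Fin n × Bool)) (T, T') = S
      at hS0 hSs ⊢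
    have hiff : ((∀ i, IsBarred (lam i) (S i)) ∧
          YamFrom ν ((List.finRange (m + 1)).flatMap fun i => colWord1 (lam i) (S i))) ↔
        ((∀ i : Fin m, IsBarred (lam i.succ) (T' i)) ∧
          YamFrom (ν + content1 (lam 0) T)
            ((List.finRange m).flatMap fun i : Fin m => colWord1 (lam i.succ) (T' i))) := by
      rw [List.finRange_succ, List.flatMap_cons, yam_append, Fin.forall_fin_succ, hc,
        List.flatMap_map]
      simp only [hS0, hSs]
      constructor
      · rintro ⟨⟨_, h1⟩, _, h2⟩
        exact ⟨h1, h2⟩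
      · rintro ⟨h1, h2⟩
        exact ⟨⟨hB, h1⟩, hYam, h2⟩
    by_cases hh : ((∀ i : Fin m, IsBarred (lam i.succ) (T' i)) ∧
          YamFrom (ν + content1 (lam 0) T)
            ((List.finRange m).flatMap fun i : Fin m => colWord1 (lam i.succ) (T' i)))
    · rw [if_pos hh, if_pos (hiff.2 hh), Fin.prod_univ_succ, ← mul_assoc]
      simp only [hS0, hSs]
      congr 2
      rw [add_assoc]
      congr 1
      funext k
      rw [Fin.sum_univ_succ, Pi.add_apply]
      simp only [hS0, hSs]
    · rw [if_neg hh, if_neg (fun h => hh (hiff.1 h)), mul_zero]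

lemma schur_zero : schur n r 0 = 1 := by
  have : IsEmpty (cells (0 : Fin n → ℕ)) := ⟨fun c => by
    have := (mem_cells (0 : Fin n → ℕ) _ _).1 c.2
    simp at this⟩
  unfold schur
  have hS : ∀ T : cells (0 : Fin n → ℕ) → Fin n, IsSSYT 0 T := fun T =>
    ⟨fun c => isEmptyElim c, fun c => isEmptyElim c⟩
  simp [hS]

lemma isYam_iff (w : List ℕ) (hw : ∀ a ∈ w, a < n) : IsYam w ↔ YamFrom (0 : Fin n → ℕ) w := by
  constructor
  · intro h t
    refine antitone_adj _ fun k k' hk => ?_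
    have := h t k
    simp only [Pi.zero_apply, zero_add, hk]
    exact this
  · intro h t k
    by_cases hk : k + 1 < n
    · have := h t (show (⟨k, by omega⟩ : Fin n) ≤ ⟨k + 1, hk⟩ from Fin.le_def.2 (by simp))
      simpa using this
    · rw [List.count_eq_zero_of_not_mem]
      · exact Nat.zero_le _
      · intro hm
        exact hk (hw _ (List.mem_of_mem_take hm))

lemma colWord_lt (lam : Fin r → Fin n → ℕ) (T : (i : Fin r) → cells (lam i) → Fin n × Bool) :
    ∀ a ∈ colWord lam T, a < n := by
  intro a ha
  unfold colWord colWord1 at ha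
  simp only [List.mem_flatMap, List.mem_filterMap] at ha
  obtain ⟨i, _, j, _, k, _, h⟩ := ha
  split_ifs at h
  simp only [Option.some.injEq] at h
  rw [← h]
  exact Fin.is_lt _

theorem final (hn : 1 ≤ n) (lam : Fin r → Fin n → ℕ) (hlam : ∀ i, IsPartition (lam i)) :
    ∏ i, factSchur n r i (lam i)
      = ∑ T ∈ Finset.univ.filter
          (fun T : (i : Fin r) → cells (lam i) → Fin n × Bool =>
            IsBarredSkew lam T ∧ IsYam (colWord lam T)),
        rename Sum.inr (cT lam T) * schur n r (contentT lam T) := by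
  have := multi (r := r) hn r id lam hlam 0 (fun _ _ _ => le_rfl)
  rw [schur_zero, one_mul] at this
  simp only [id] at this
  rw [this, Finset.sum_filter]
  refine Finset.sum_congr rfl fun T _ => ?_
  have e : rename Sum.inr (cT lam T) = ∏ i, (cY (yv i) (lam i) (T i) : Rg n r) := by
    unfold cT
    rw [map_prod]
    exact Finset.prod_congr rfl fun i _ => rename_cT1 i _ _
  rw [isYam_iff _ (colWord_lt lam T), e, zero_add]
  unfold IsBarredSkew colWord contentT
  congr

end FS

/-- Corollary 3.5: `s_λ̄(x|y) = Σ c_T(y) s_{ω(T)}(x)`, summed over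
barred skew tableaux of shape `λ̄` with Yamanouchi unbarred column word. -/
theorem factorial_schur_expansion_yam (n r : ℕ) (hn : 1 ≤ n) (hr : 1 ≤ r)
    (lam : Fin r → Fin n → ℕ) (hlam : ∀ i, IsPartition (lam i)) :
    ∏ i, factSchur n r i (lam i)
      = ∑ T ∈ Finset.univ.filter
          (fun T : (i : Fin r) → cells (lam i) → Fin n × Bool =>
            IsBarredSkew lam T ∧ IsYam (colWord lam T)),
        rename Sum.inr (cT lam T) * schur n r (contentT lam T) := by
  exact FS.final hn lam hlam
end
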